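/- arXiv:2407.09830 — 3 statements merged into one kernel-verified Lean document; each statement's English description precedes it below -/
import Mathlib

section
/- Let U⊆ℂ be open, a∈ℝ\{0}, b>0, and let f:U×[b,∞)→ℂ satisfy: (i) z↦f(z,y) is holomorphic on U for every y∈[b,∞); (ii) there exist n∈ℕ, α≥0 with n>α+1 such that f(z,·)∈C_α^n([b,∞)) for every z∈U and the norm ‖f(z,·)‖_{C_α^n([b,∞))} is locally bounded on U. Then for every z∈U and y₀∈ℝ the limit ψ(z) := lim_{ε→0⁺} ∫_b^∞ e^{−ε(y−y₀)²} e^{iay²} f(z,y) dy exists, is independent of y₀, and the function ψ is holomorphic on U. -/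
open Set Filter MeasureTheory Topology

noncomputable section

/-- Membership in the space `C_α^n([b,∞))`: `f` is `n`-times continuously differentiable
on `[b,∞)` and its `n`-th derivative satisfies a polynomial bound `M·y^α`. -/
def MemCnAlpha (b : ℝ) (n : ℕ) (α : ℝ) (f : ℝ → ℂ) : Prop :=
  ContDiffOn ℝ n f (Set.Ici b) ∧
    ∃ M : ℝ, 0 ≤ M ∧ ∀ y ∈ Set.Ici b, ‖iteratedDerivWithin n f (Set.Ici b) y‖ ≤ M * y ^ α

/-- The norm on the space `C_α^n([b,∞))`. -/
def CnAlphaNorm (b : ℝ) (n : ℕ) (α : ℝ) (f : ℝ → ℂ) : ℝ :=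
  (∑ k ∈ Finset.range n, ‖iteratedDerivWithin k f (Set.Ici b) b‖ / b ^ ((n : ℝ) - k + α)) +
    ⨆ y : Set.Ici b, ‖iteratedDerivWithin n f (Set.Ici b) y‖ / (y : ℝ) ^ α


def Ph (a ε y₀ : ℝ) (w : ℂ) : ℂ := -(ε : ℂ) * (w - y₀) ^ 2 + Complex.I * a * w ^ 2

def Ph' (a ε y₀ : ℝ) (w : ℂ) : ℂ := -(ε : ℂ) * (2 * (w - y₀)) + Complex.I * a * (2 * w)

def om (s : ℝ) : ℂ := 1 + s * Complex.I

def kap (a s ε y₀ : ℝ) : ℕ → ℝ → ℂ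
  | 0, y => Complex.exp (Ph a ε y₀ y)
  | j + 1, y => (-(om s)) ^ (j + 1) / (j.factorial : ℂ) *
      ∫ t in Set.Ioi (0 : ℝ), (t : ℂ) ^ j * Complex.exp (Ph a ε y₀ (y + om s * t))

lemma Ph_hasDerivAt (a ε y₀ : ℝ) (w : ℂ) : HasDerivAt (Ph a ε y₀) (Ph' a ε y₀ w) w := by
  unfold Ph Ph'
  have h1 : HasDerivAt (fun w : ℂ => (w - y₀) ^ 2) (2 * (w - y₀)) w := by
    simpa using! ((hasDerivAt_id w).sub_const (y₀ : ℂ)).pow 2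
  have h2 : HasDerivAt (fun w : ℂ => w ^ 2) (2 * w) w := by
    simpa using! (hasDerivAt_id w).pow 2
  exact (h1.const_mul _).add (h2.const_mul _)

lemma Ph_cont (a ε y₀ : ℝ) : Continuous (Ph a ε y₀) := by unfold Ph; fun_prop
lemma Ph'_cont (a ε y₀ : ℝ) : Continuous (Ph' a ε y₀) := by unfold Ph'; fun_prop

lemma Ph_re (a s ε y₀ y t : ℝ) (hs : s ^ 2 = 1) :
    (Ph a ε y₀ (y + om s * t)).re =
      -ε * (y - y₀) ^ 2 - 2 * ε * (y - y₀) * t - 2 * (s * a) * y * t - 2 * (s * a) * t ^ 2 := by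
  have : (Ph a ε y₀ (y + om s * t)).re =
     -ε * ((y + t - y₀) ^ 2 - (s * t) ^ 2) - a * (2 * (y + t) * (s * t)) := by
    simp [Ph, om, pow_two]
    ring
  rw [this]
  linear_combination ε * t ^ 2 * hs

lemma exp_Ph_norm (a s ε y₀ y t δ : ℝ) (hs : s ^ 2 = 1) (hc : 0 < s * a) (hε : 0 ≤ ε)
    (hδ : 0 < δ) (hsm : 2 * ε * |y₀| ≤ s * a * δ) (hy : δ ≤ y) (ht : 0 ≤ t) :
    ‖Complex.exp (Ph a ε y₀ (y + om s * t))‖ ≤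
      Real.exp (-ε * (y - y₀) ^ 2) * Real.exp (-(s * a * y * t)) := by
  rw [Complex.norm_exp, ← Real.exp_add, Ph_re a s ε y₀ y t hs]
  apply Real.exp_le_exp.mpr
  have h1 : 2 * ε * y₀ ≤ s * a * y := by
    calc 2 * ε * y₀ ≤ 2 * ε * |y₀| := by gcongr; exact le_abs_self _
      _ ≤ s * a * δ := hsm
      _ ≤ s * a * y := by gcongr
  have h2 := mul_le_mul_of_nonneg_right h1 ht
  have h3 : 0 ≤ s * a * t ^ 2 := by positivity
  have h4 : 0 ≤ ε * y * t := mul_nonneg (mul_nonneg hε (hδ.le.trans hy)) ht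
  nlinarith

lemma integrable_pow_exp (j : ℕ) (d : ℝ) (hd : 0 < d) :
    IntegrableOn (fun t : ℝ => t ^ j * Real.exp (-(d * t))) (Set.Ioi 0) := by
  have := integrableOn_rpow_mul_exp_neg_mul_rpow (p := 1) (s := j) (b := d)
    (by have := Nat.cast_nonneg (α := ℝ) j; linarith) one_pos hd
  simpa using this

lemma integral_pow_exp (j : ℕ) (d : ℝ) (hd : 0 < d) :
    ∫ t in Set.Ioi (0 : ℝ), t ^ j * Real.exp (-(d * t)) = (1 / d) ^ (j + 1) * j.factorial := by
  have := Real.integral_rpow_mul_exp_neg_mul_Ioi (a := j + 1) (r := d) (by positivity) hd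
  simp only [add_sub_cancel_right, Real.Gamma_nat_eq_factorial] at this
  simp only [Real.rpow_natCast] at this
  rw [this]
  norm_cast

lemma kint_cont (a s ε y₀ y : ℝ) (j : ℕ) :
    Continuous (fun t : ℝ => (t : ℂ) ^ j * Complex.exp (Ph a ε y₀ (y + om s * t))) := by
  have := Ph_cont a ε y₀
  fun_prop

lemma kint_bound (a s ε y₀ y t δ : ℝ) (j : ℕ) (hs : s ^ 2 = 1) (hc : 0 < s * a) (hε : 0 ≤ ε)
    (hδ : 0 < δ) (hsm : 2 * ε * |y₀| ≤ s * a * δ) (hy : δ ≤ y) (ht : 0 ≤ t) :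
    ‖(t : ℂ) ^ j * Complex.exp (Ph a ε y₀ (y + om s * t))‖ ≤
      Real.exp (-ε * (y - y₀) ^ 2) * (t ^ j * Real.exp (-(s * a * y * t))) := by
  rw [norm_mul, norm_pow, Complex.norm_real, Real.norm_of_nonneg ht]
  calc _ ≤ t ^ j * (Real.exp (-ε * (y - y₀) ^ 2) * Real.exp (-(s * a * y * t))) := by
        gcongr; exact exp_Ph_norm a s ε y₀ y t δ hs hc hε hδ hsm hy ht
    _ = _ := by ring

lemma kint_integrable (a s ε y₀ y δ : ℝ) (j : ℕ) (hs : s ^ 2 = 1) (hc : 0 < s * a) (hε : 0 ≤ ε)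
    (hδ : 0 < δ) (hsm : 2 * ε * |y₀| ≤ s * a * δ) (hy : δ ≤ y) :
    IntegrableOn (fun t : ℝ => (t : ℂ) ^ j * Complex.exp (Ph a ε y₀ (y + om s * t)))
      (Set.Ioi 0) := by
  have hy0 : 0 < y := hδ.trans_le hy
  refine Integrable.mono' ((integrable_pow_exp j (s * a * y) (by positivity)).const_mul
    (Real.exp (-ε * (y - y₀) ^ 2))) (kint_cont a s ε y₀ y j).aestronglyMeasurable ?_
  filter_upwards [ae_restrict_mem measurableSet_Ioi] with t ht
  exact kint_bound a s ε y₀ y t δ j hs hc hε hδ hsm hy (le_of_lt ht)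

lemma om_ne (s : ℝ) : om s ≠ 0 := by
  intro h
  have := congrArg Complex.re h
  simp [om] at this

lemma kap_bound (a s ε y₀ y δ : ℝ) (j : ℕ) (hs : s ^ 2 = 1) (hc : 0 < s * a) (hε : 0 ≤ ε)
    (hδ : 0 < δ) (hsm : 2 * ε * |y₀| ≤ s * a * δ) (hy : δ ≤ y) :
    ‖kap a s ε y₀ j y‖ ≤ (‖om s‖ / (s * a * y)) ^ j * Real.exp (-ε * (y - y₀) ^ 2) := by
  have hy0 : 0 < y := hδ.trans_le hy
  cases j with
  | zero =>
    have := exp_Ph_norm a s ε y₀ y 0 δ hs hc hε hδ hsm hy le_rfl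
    simpa [kap] using this
  | succ j =>
    have h1 : ‖∫ t in Set.Ioi (0 : ℝ), (t : ℂ) ^ j * Complex.exp (Ph a ε y₀ (y + om s * t))‖ ≤
        ∫ t in Set.Ioi (0 : ℝ),
          Real.exp (-ε * (y - y₀) ^ 2) * (t ^ j * Real.exp (-(s * a * y * t))) := by
      refine norm_integral_le_of_norm_le ((integrable_pow_exp j (s * a * y)
        (by positivity)).const_mul _) ?_
      filter_upwards [ae_restrict_mem measurableSet_Ioi] with t ht
      exact kint_bound a s ε y₀ y t δ j hs hc hε hδ hsm hy (le_of_lt ht)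
    rw [integral_const_mul, integral_pow_exp j _ (by positivity)] at h1
    have hf : (0 : ℝ) < j.factorial := by positivity
    simp only [kap, norm_mul, norm_div, norm_pow, norm_neg, Complex.norm_natCast]
    calc _ ≤ ‖om s‖ ^ (j + 1) / (j.factorial : ℝ) *
          (Real.exp (-ε * (y - y₀) ^ 2) * ((1 / (s * a * y)) ^ (j + 1) * j.factorial)) := by
          gcongr
      _ = _ := by
        rw [div_pow, div_pow, one_pow]
        field_simp

lemma Ph'_norm (a s ε y₀ y t Y : ℝ) (hε : 0 ≤ ε) (hy : |y| ≤ Y) (ht : 0 ≤ t) :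
    ‖Ph' a ε y₀ (y + om s * t)‖ ≤
      (ε * (2 * (Y + |y₀|)) + |a| * (2 * Y)) + (2 * (ε + |a|) * ‖om s‖) * t := by
  have h0 : ‖(y : ℂ) + om s * t‖ ≤ Y + ‖om s‖ * t := by
    refine (norm_add_le _ _).trans ?_
    rw [norm_mul, Complex.norm_real, Complex.norm_real, Real.norm_of_nonneg ht]
    gcongr
    exact hy
  have h1 : ‖(y : ℂ) + om s * t - y₀‖ ≤ Y + ‖om s‖ * t + |y₀| := by
    refine (norm_sub_le _ _).trans ?_
    rw [Complex.norm_real]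
    gcongr
    exact le_rfl
  unfold Ph'
  refine (norm_add_le _ _).trans ?_
  simp only [norm_mul, norm_neg, Complex.norm_real, Complex.norm_I, one_mul, Complex.norm_ofNat,
    Real.norm_of_nonneg hε, Real.norm_eq_abs a]
  calc _ ≤ ε * (2 * (Y + ‖om s‖ * t + |y₀|)) + |a| * (2 * (Y + ‖om s‖ * t)) := by gcongr
    _ = _ := by ring

lemma dkint_bound (a s ε y₀ y t δ Y : ℝ) (j : ℕ) (hs : s ^ 2 = 1) (hc : 0 < s * a) (hε : 0 ≤ ε)
    (hδ : 0 < δ) (hsm : 2 * ε * |y₀| ≤ s * a * δ) (hy : δ ≤ y) (hY : |y| ≤ Y) (ht : 0 ≤ t) :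
    ‖(t : ℂ) ^ j * (Complex.exp (Ph a ε y₀ (y + om s * t)) * Ph' a ε y₀ (y + om s * t))‖ ≤
      (ε * (2 * (Y + |y₀|)) + |a| * (2 * Y)) * (t ^ j * Real.exp (-(s * a * δ * t))) +
      (2 * (ε + |a|) * ‖om s‖) * (t ^ (j + 1) * Real.exp (-(s * a * δ * t))) := by
  have h1 := exp_Ph_norm a s ε y₀ y t δ hs hc hε hδ hsm hy ht
  have h2 := Ph'_norm a s ε y₀ y t Y hε hY ht
  have h3 : Real.exp (-ε * (y - y₀) ^ 2) * Real.exp (-(s * a * y * t)) ≤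
      1 * Real.exp (-(s * a * δ * t)) := by
    gcongr
    apply Real.exp_le_one_iff.mpr
    have : 0 ≤ ε * (y - y₀) ^ 2 := by positivity
    linarith
  rw [norm_mul, norm_mul, norm_pow, Complex.norm_real, Real.norm_of_nonneg ht]
  calc _ ≤ t ^ j * ((1 * Real.exp (-(s * a * δ * t))) * ((ε * (2 * (Y + |y₀|)) + |a| * (2 * Y)) + (2 * (ε + |a|) * ‖om s‖) * t)) := by
        gcongr
        exact h1.trans h3
    _ = _ := by ring

lemma dkint_cont (a s ε y₀ y : ℝ) (j : ℕ) :
    Continuous (fun t : ℝ => (t : ℂ) ^ j *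
      (Complex.exp (Ph a ε y₀ (y + om s * t)) * Ph' a ε y₀ (y + om s * t))) := by
  have := Ph_cont a ε y₀
  have := Ph'_cont a ε y₀
  fun_prop

lemma dbound_int (A B d : ℝ) (hd : 0 < d) (j : ℕ) :
    IntegrableOn (fun t : ℝ => A * (t ^ j * Real.exp (-(d * t))) +
      B * (t ^ (j + 1) * Real.exp (-(d * t)))) (Set.Ioi 0) :=
  ((integrable_pow_exp j d hd).const_mul A).add ((integrable_pow_exp (j + 1) d hd).const_mul B)

lemma kint_hasDerivAt (a s ε y₀ y δ : ℝ) (j : ℕ) (hs : s ^ 2 = 1) (hc : 0 < s * a) (hε : 0 ≤ ε)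
    (hδ : 0 < δ) (hsm : 2 * ε * |y₀| ≤ s * a * δ) (hy : δ < y) :
    IntegrableOn (fun t : ℝ => (t : ℂ) ^ j *
        (Complex.exp (Ph a ε y₀ (y + om s * t)) * Ph' a ε y₀ (y + om s * t))) (Set.Ioi 0) ∧
    HasDerivAt (fun y : ℝ => ∫ t in Set.Ioi (0 : ℝ),
        (t : ℂ) ^ j * Complex.exp (Ph a ε y₀ (y + om s * t)))
      (∫ t in Set.Ioi (0 : ℝ), (t : ℂ) ^ j *
        (Complex.exp (Ph a ε y₀ (y + om s * t)) * Ph' a ε y₀ (y + om s * t))) y := by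
  refine hasDerivAt_integral_of_dominated_loc_of_deriv_le (s := Set.Ioo δ (y + 1))
    (bound := fun t => (ε * (2 * ((y + 1) + |y₀|)) + |a| * (2 * (y + 1))) * (t ^ j * Real.exp (-(s * a * δ * t))) +
      (2 * (ε + |a|) * ‖om s‖) * (t ^ (j + 1) * Real.exp (-(s * a * δ * t))))
    (F := fun (y t : ℝ) => (t : ℂ) ^ j * Complex.exp (Ph a ε y₀ (y + om s * t)))
    (F' := fun (y t : ℝ) => (t : ℂ) ^ j *
        (Complex.exp (Ph a ε y₀ (y + om s * t)) * Ph' a ε y₀ (y + om s * t)))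
    (Ioo_mem_nhds hy (by linarith)) ?_ ?_ ?_ ?_ ?_ ?_
  · exact Eventually.of_forall fun x => (kint_cont a s ε y₀ x j).aestronglyMeasurable
  · exact kint_integrable a s ε y₀ y δ j hs hc hε hδ hsm hy.le
  · exact (dkint_cont a s ε y₀ y j).aestronglyMeasurable
  · filter_upwards [ae_restrict_mem measurableSet_Ioi] with t ht x hx
    exact dkint_bound a s ε y₀ x t δ (y + 1) j hs hc hε hδ hsm hx.1.le
      (by rw [abs_of_pos (hδ.trans hx.1)]; exact hx.2.le) (le_of_lt ht)
  · exact dbound_int _ _ _ (by positivity) j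
  · refine Eventually.of_forall fun t x _ => ?_
    have h1 : HasDerivAt (fun x : ℝ => (x : ℂ) + om s * t) 1 x :=
      (Complex.ofRealCLM.hasDerivAt (x := x)).add_const _
    have h2 := ((Ph_hasDerivAt a ε y₀ (x + om s * t)).comp x h1).cexp.const_mul ((t : ℂ) ^ j)
    simpa [Function.comp_def] using h2

lemma pow_exp_tendsto (j : ℕ) (d : ℝ) (hd : 0 < d) :
    Tendsto (fun t : ℝ => t ^ j * Real.exp (-(d * t))) atTop (𝓝 0) := by
  simpa using tendsto_rpow_mul_exp_neg_mul_atTop_nhds_zero j d hd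

lemma kint_tendsto (a s ε y₀ y δ : ℝ) (j : ℕ) (hs : s ^ 2 = 1) (hc : 0 < s * a) (hε : 0 ≤ ε)
    (hδ : 0 < δ) (hsm : 2 * ε * |y₀| ≤ s * a * δ) (hy : δ ≤ y) :
    Tendsto (fun t : ℝ => (t : ℂ) ^ j * Complex.exp (Ph a ε y₀ (y + om s * t))) atTop (𝓝 0) := by
  have hy0 : 0 < y := hδ.trans_le hy
  have := (pow_exp_tendsto j (s * a * y) (by positivity)).const_mul (Real.exp (-ε * (y - y₀) ^ 2))
  rw [mul_zero] at this
  refine squeeze_zero_norm' ?_ this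
  filter_upwards [eventually_ge_atTop 0] with t ht
  exact kint_bound a s ε y₀ y t δ j hs hc hε hδ hsm hy ht

lemma exp_hasDerivAt_t (a s ε y₀ y t : ℝ) :
    HasDerivAt (fun t : ℝ => Complex.exp (Ph a ε y₀ (y + om s * t)))
      (om s * (Complex.exp (Ph a ε y₀ (y + om s * t)) * Ph' a ε y₀ (y + om s * t))) t := by
  have h1 : HasDerivAt (fun t : ℝ => (y : ℂ) + om s * t) (om s * 1) t :=
    ((Complex.ofRealCLM.hasDerivAt (x := t)).const_mul (om s)).const_add _
  have h2 := ((Ph_hasDerivAt a ε y₀ (y + om s * t)).comp t h1).cexp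
  refine h2.congr_deriv ?_
  simp only [Function.comp_def]
  ring

lemma kap_hasDerivAt (a s ε y₀ y δ : ℝ) (j : ℕ) (hs : s ^ 2 = 1) (hc : 0 < s * a) (hε : 0 ≤ ε)
    (hδ : 0 < δ) (hsm : 2 * ε * |y₀| ≤ s * a * δ) (hy : δ < y) :
    HasDerivAt (kap a s ε y₀ (j + 1)) (kap a s ε y₀ j y) y := by
  obtain ⟨hi, hd⟩ := kint_hasDerivAt a s ε y₀ y δ j hs hc hε hδ hsm hy
  have hd2 := hd.const_mul ((-(om s)) ^ (j + 1) / (j.factorial : ℂ))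
  refine HasDerivAt.congr_deriv (f := kap a s ε y₀ (j + 1)) hd2 ?_
  have ho := om_ne s
  cases j with
  | zero =>
    have key := integral_Ioi_of_hasDerivAt_of_tendsto' (a := (0 : ℝ)) (m := (0 : ℂ))
      (fun t _ => exp_hasDerivAt_t a s ε y₀ y t)
      (by simpa [IntegrableOn] using hi.const_mul (om s))
      (by simpa using kint_tendsto a s ε y₀ y δ 0 hs hc hε hδ hsm hy.le)
    rw [integral_const_mul] at key
    simp only [kap, zero_add, pow_one, Nat.factorial_zero, Nat.cast_one, div_one, pow_zero, one_mul]
    rw [neg_mul, key]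
    simp
  | succ j =>
    have hk := kint_integrable a s ε y₀ y δ j hs hc hε hδ hsm hy.le
    have key := integral_Ioi_of_hasDerivAt_of_tendsto' (a := (0 : ℝ)) (m := (0 : ℂ))
      (f := fun t : ℝ => (t : ℂ) ^ (j + 1) * Complex.exp (Ph a ε y₀ (y + om s * t)))
      (f' := fun t : ℝ => ((j : ℂ) + 1) * ((t : ℂ) ^ j * Complex.exp (Ph a ε y₀ (y + om s * t))) +
        om s * ((t : ℂ) ^ (j + 1) *
          (Complex.exp (Ph a ε y₀ (y + om s * t)) * Ph' a ε y₀ (y + om s * t))))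
      (fun t _ => by
        have h1 : HasDerivAt (fun t : ℝ => (t : ℂ) ^ (j + 1)) (((j : ℂ) + 1) * (t : ℂ) ^ j) t := by
          simpa using! (Complex.ofRealCLM.hasDerivAt (x := t)).pow (j + 1)
        refine (h1.mul (exp_hasDerivAt_t a s ε y₀ y t)).congr_deriv ?_
        ring)
      ((hk.const_mul _).add (hi.const_mul _))
      (kint_tendsto a s ε y₀ y δ (j + 1) hs hc hε hδ hsm hy.le)
    rw [integral_add (hk.const_mul _) (hi.const_mul _), integral_const_mul, integral_const_mul] at key
    simp only [kap]
    have h2 : (∫ t in Set.Ioi (0 : ℝ), (t : ℂ) ^ (j + 1) *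
        (Complex.exp (Ph a ε y₀ (y + om s * t)) * Ph' a ε y₀ (y + om s * t))) =
        -((j : ℂ) + 1) / om s *
          ∫ t in Set.Ioi (0 : ℝ), (t : ℂ) ^ j * Complex.exp (Ph a ε y₀ (y + om s * t)) := by
      have : (0 : ℂ) ^ (j + 1) = 0 := by simp
      simp only [Complex.ofReal_zero, this, zero_mul, sub_zero] at key
      rw [div_mul_eq_mul_div, eq_div_iff ho]
      linear_combination key
    rw [h2, Nat.factorial_succ]
    have hj : ((j : ℂ) + 1) ≠ 0 := by exact_mod_cast Nat.succ_ne_zero j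
    have hf : (j.factorial : ℂ) ≠ 0 := by exact_mod_cast j.factorial_ne_zero
    push_cast
    field_simp
    ring

lemma kap_cont (a s ε y₀ δ : ℝ) (j : ℕ) (hs : s ^ 2 = 1) (hc : 0 < s * a) (hε : 0 ≤ ε)
    (hδ : 0 < δ) (hsm : 2 * ε * |y₀| ≤ s * a * δ) :
    ContinuousOn (kap a s ε y₀ j) (Set.Ioi δ) := by
  cases j with
  | zero =>
    have := Ph_cont a ε y₀
    have : Continuous (kap a s ε y₀ 0) := by unfold kap; fun_prop
    exact this.continuousOn
  | succ j =>
    exact fun y hy => (kap_hasDerivAt a s ε y₀ y δ j hs hc hε hδ hsm hy).continuousAt.continuousWithinAt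

lemma small_ev (y₀ D : ℝ) (hD : 0 < D) : ∀ᶠ ε : ℝ in 𝓝[>] 0, 0 < ε ∧ 2 * ε * |y₀| ≤ D := by
  have h : Tendsto (fun ε : ℝ => 2 * ε * |y₀|) (𝓝[>] 0) (𝓝 (2 * 0 * |y₀|)) :=
    Tendsto.mono_left (Continuous.tendsto (by fun_prop) 0) nhdsWithin_le_nhds
  rw [mul_zero, zero_mul] at h
  filter_upwards [self_mem_nhdsWithin, h.eventually_le_const hD] with ε h1 h2 using ⟨h1, h2⟩

lemma kap_tendsto (a s y₀ y δ : ℝ) (j : ℕ) (hs : s ^ 2 = 1) (hc : 0 < s * a)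
    (hδ : 0 < δ) (hy : δ ≤ y) :
    Tendsto (fun ε => kap a s ε y₀ j y) (𝓝[>] 0) (𝓝 (kap a s 0 0 j y)) := by
  have hy0 : 0 < y := hδ.trans_le hy
  have hE : ∀ w : ℂ, Tendsto (fun ε : ℝ => Complex.exp (Ph a ε y₀ w)) (𝓝[>] 0)
      (𝓝 (Complex.exp (Ph a 0 0 w))) := by
    intro w
    have h1 : Ph a 0 0 w = Ph a 0 y₀ w := by simp [Ph]
    rw [h1]
    refine Tendsto.mono_left (Continuous.tendsto (f := fun ε : ℝ => Complex.exp (Ph a ε y₀ w)) ?_ 0)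
      nhdsWithin_le_nhds
    unfold Ph
    fun_prop
  cases j with
  | zero => exact hE _
  | succ j =>
    refine Tendsto.const_mul _ ?_
    refine tendsto_integral_filter_of_dominated_convergence
      (fun t => t ^ j * Real.exp (-(s * a * y * t))) ?_ ?_ ?_ ?_
    · exact Eventually.of_forall fun x => (kint_cont a s x y₀ y j).aestronglyMeasurable
    · filter_upwards [small_ev y₀ (s * a * δ) (by positivity)] with ε ⟨h1, h2⟩
      filter_upwards [ae_restrict_mem measurableSet_Ioi] with t ht
      refine (kint_bound a s ε y₀ y t δ j hs hc h1.le hδ h2 hy (le_of_lt ht)).trans ?_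
      have ht' : (0 : ℝ) < t := ht
      refine mul_le_of_le_one_left (by positivity) ?_
      apply Real.exp_le_one_iff.mpr
      have : 0 ≤ ε * (y - y₀) ^ 2 := by positivity
      linarith
    · exact integrable_pow_exp j _ (by positivity)
    · exact Eventually.of_forall fun t => (hE _).const_mul _
lemma Cn_nonneg_sup (b : ℝ) (hb : 0 < b) (n : ℕ) (α : ℝ) (f : ℝ → ℂ) :
    0 ≤ ⨆ y : Set.Ici b, ‖iteratedDerivWithin n f (Set.Ici b) y‖ / (y : ℝ) ^ α :=
  Real.iSup_nonneg fun y => div_nonneg (norm_nonneg _)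
    (Real.rpow_nonneg (hb.le.trans y.2) _)

lemma Cn_nonneg (b : ℝ) (hb : 0 < b) (n : ℕ) (α : ℝ) (f : ℝ → ℂ) : 0 ≤ CnAlphaNorm b n α f :=
  add_nonneg (Finset.sum_nonneg fun k _ => by positivity) (Cn_nonneg_sup b hb n α f)

lemma Cn_bdry (b : ℝ) (hb : 0 < b) (n : ℕ) (α : ℝ) (f : ℝ → ℂ) (k : ℕ) (hk : k < n) :
    ‖iteratedDerivWithin k f (Set.Ici b) b‖ ≤ CnAlphaNorm b n α f * b ^ ((n : ℝ) - k + α) := by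
  rw [← div_le_iff₀ (by positivity)]
  have h1 := Finset.single_le_sum (f := fun k : ℕ =>
    ‖iteratedDerivWithin k f (Set.Ici b) b‖ / b ^ ((n : ℝ) - k + α)) (s := Finset.range n)
    (fun i _ => by positivity) (Finset.mem_range.mpr hk)
  have h2 := Cn_nonneg_sup b hb n α f
  unfold CnAlphaNorm
  linarith

lemma Cn_top (b : ℝ) (hb : 0 < b) (n : ℕ) (α : ℝ) (f : ℝ → ℂ) (hf : MemCnAlpha b n α f)
    (y : ℝ) (hy : b ≤ y) :
    ‖iteratedDerivWithin n f (Set.Ici b) y‖ ≤ CnAlphaNorm b n α f * y ^ α := by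
  have hy0 : 0 < y := hb.trans_le hy
  rw [← div_le_iff₀ (by positivity)]
  obtain ⟨_, M, hM, hMb⟩ := hf
  have h1 : BddAbove (Set.range fun y : Set.Ici b =>
      ‖iteratedDerivWithin n f (Set.Ici b) y‖ / (y : ℝ) ^ α) := by
    refine ⟨M, ?_⟩
    rintro _ ⟨x, rfl⟩
    have hx0 : 0 < (x : ℝ) := hb.trans_le x.2
    exact (div_le_iff₀ (by positivity)).mpr (hMb x x.2)
  have h2 := le_ciSup h1 ⟨y, hy⟩
  have h3 : 0 ≤ ∑ k ∈ Finset.range n,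
    ‖iteratedDerivWithin k f (Set.Ici b) b‖ / b ^ ((n : ℝ) - k + α) :=
    Finset.sum_nonneg fun k _ => by positivity
  unfold CnAlphaNorm
  dsimp only at h2
  linarith

lemma Cn_hasDeriv (b : ℝ) (n : ℕ) (f : ℝ → ℂ) (hf : ContDiffOn ℝ n f (Set.Ici b))
    (k : ℕ) (hk : k < n) (y : ℝ) (hy : b ≤ y) :
    HasDerivWithinAt (iteratedDerivWithin k f (Set.Ici b))
      (iteratedDerivWithin (k + 1) f (Set.Ici b) y) (Set.Ici b) y := by
  rw [iteratedDerivWithin_succ]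
  exact (hf.differentiableOn_iteratedDerivWithin (by exact_mod_cast hk)
    (uniqueDiffOn_Ici b) y hy).hasDerivWithinAt

lemma Cn_cont (b : ℝ) (n : ℕ) (f : ℝ → ℂ) (hf : ContDiffOn ℝ n f (Set.Ici b))
    (k : ℕ) (hk : k ≤ n) : ContinuousOn (iteratedDerivWithin k f (Set.Ici b)) (Set.Ici b) :=
  hf.continuousOn_iteratedDerivWithin (by exact_mod_cast hk) (uniqueDiffOn_Ici b)

lemma Cn_bound (b : ℝ) (hb : 0 < b) (n : ℕ) (α : ℝ) (hα : 0 ≤ α) (f : ℝ → ℂ)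
    (hf : MemCnAlpha b n α f) (m : ℕ) (hm : m ≤ n) :
    ∀ y, b ≤ y → ‖iteratedDerivWithin (n - m) f (Set.Ici b) y‖ ≤
      (m + 1) * CnAlphaNorm b n α f * y ^ ((m : ℝ) + α) := by
  induction m with
  | zero =>
    intro y hy
    simpa using Cn_top b hb n α f hf y hy
  | succ m ih =>
    intro y hy
    have hy0 : 0 < y := hb.trans_le hy
    have ih := ih (by omega)
    set N := CnAlphaNorm b n α f with hN
    have hN0 : 0 ≤ N := Cn_nonneg b hb n α f
    have e : n - (m + 1) + 1 = n - m := by omega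
    have h1 := Convex.norm_image_sub_le_of_norm_hasDerivWithin_le (𝕜 := ℝ) (s := Set.Icc b y)
      (x := b) (y := y)
      (f := iteratedDerivWithin (n - (m + 1)) f (Set.Ici b))
      (f' := iteratedDerivWithin (n - m) f (Set.Ici b)) (C := (m + 1) * N * y ^ ((m : ℝ) + α))
      (fun x hx => by
        have := Cn_hasDeriv b n f hf.1 (n - (m + 1)) (by omega) x hx.1
        rw [e] at this
        exact this.mono Set.Icc_subset_Ici_self)
      (fun x hx => (ih x hx.1).trans (by
        have hx0 : 0 < x := hb.trans_le hx.1
        have : x ^ ((m : ℝ) + α) ≤ y ^ ((m : ℝ) + α) :=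
          Real.rpow_le_rpow hx0.le hx.2 (by positivity)
        gcongr))
      (convex_Icc b y) ⟨le_rfl, hy⟩ ⟨hy, le_rfl⟩
    have h2 := Cn_bdry b hb n α f (n - (m + 1)) (by omega)
    have e2 : (n : ℝ) - ((n - (m + 1) : ℕ) : ℝ) + α = (m : ℝ) + 1 + α := by
      rw [Nat.cast_sub hm]; push_cast; ring
    rw [e2] at h2
    have h3 : b ^ ((m : ℝ) + 1 + α) ≤ y ^ ((m : ℝ) + 1 + α) :=
      Real.rpow_le_rpow hb.le hy (by positivity)
    have h4 : y ^ ((m : ℝ) + 1 + α) = y ^ ((m : ℝ) + α) * y := by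
      rw [show (m : ℝ) + 1 + α = (m + α) + 1 by ring, Real.rpow_add_one hy0.ne']
    have h5 : ‖y - b‖ ≤ y := by rw [Real.norm_of_nonneg (by linarith)]; linarith
    have h6 := norm_le_norm_add_norm_sub' (iteratedDerivWithin (n - (m + 1)) f (Set.Ici b) y)
      (iteratedDerivWithin (n - (m + 1)) f (Set.Ici b) b)
    push_cast
    calc _ ≤ N * b ^ ((m : ℝ) + 1 + α) + (m + 1) * N * y ^ ((m : ℝ) + α) * ‖y - b‖ := by
          linarith
      _ ≤ N * y ^ ((m : ℝ) + 1 + α) + (m + 1) * N * y ^ ((m : ℝ) + α) * y := by gcongr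
      _ = _ := by rw [h4]; ring

lemma gauss_le (ε y₀ y : ℝ) (hε : 0 < ε) :
    Real.exp (-ε * (y - y₀) ^ 2) ≤ Real.exp (y₀ + 1 / (4 * ε)) * Real.exp (-y) := by
  rw [← Real.exp_add]
  apply Real.exp_le_exp.mpr
  have h : 0 ≤ ε * (y - y₀ - 1 / (2 * ε)) ^ 2 := by positivity
  have h2 : ε * (y - y₀ - 1 / (2 * ε)) ^ 2 = ε * (y - y₀) ^ 2 - (y - y₀) + 1 / (4 * ε) := by
    field_simp
    ring
  linarith

lemma kapg_bound (a s ε y₀ b : ℝ) (j : ℕ) (hs : s ^ 2 = 1) (hc : 0 < s * a) (hε : 0 < ε)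
    (hb : 0 < b) (hsm : 2 * ε * |y₀| ≤ s * a * (b / 2)) :
    ∃ C : ℝ, 0 ≤ C ∧ ∀ y, b ≤ y → ‖kap a s ε y₀ j y‖ ≤ C * Real.exp (-y) := by
  refine ⟨(‖om s‖ / (s * a * b)) ^ j * Real.exp (y₀ + 1 / (4 * ε)), by positivity, fun y hy => ?_⟩
  refine (kap_bound a s ε y₀ y (b / 2) j hs hc hε.le (by positivity) hsm (by linarith)).trans ?_
  rw [mul_assoc ((‖om s‖ / (s * a * b)) ^ j)]
  have := gauss_le ε y₀ y hε
  have hy0 : 0 < y := hb.trans_le hy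
  refine mul_le_mul ?_ this (by positivity) (by positivity)
  gcongr

lemma rpow_exp_int (p b : ℝ) (hp : 0 ≤ p) (hb : 0 < b) :
    IntegrableOn (fun y : ℝ => y ^ p * Real.exp (-y)) (Set.Ioi b) := by
  have := integrableOn_rpow_mul_exp_neg_mul_rpow (p := 1) (s := p) (b := 1)
    (by linarith) one_pos one_pos
  simp only [Real.rpow_one, neg_mul, one_mul] at this
  exact this.mono_set (Set.Ioi_subset_Ioi hb.le)

lemma kapg_int (a s ε y₀ b p D : ℝ) (j : ℕ) (hs : s ^ 2 = 1) (hc : 0 < s * a) (hε : 0 < ε)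
    (hb : 0 < b) (hsm : 2 * ε * |y₀| ≤ s * a * (b / 2)) (g : ℝ → ℂ)
    (hg : ContinuousOn g (Set.Ici b)) (hp : 0 ≤ p) (hgb : ∀ y, b ≤ y → ‖g y‖ ≤ D * y ^ p) :
    IntegrableOn (fun y => kap a s ε y₀ j y * g y) (Set.Ioi b) ∧
    Tendsto (fun y => kap a s ε y₀ j y * g y) atTop (𝓝 0) := by
  obtain ⟨C, hC, hCb⟩ := kapg_bound a s ε y₀ b j hs hc hε hb hsm
  have hbd : ∀ y, b ≤ y → ‖kap a s ε y₀ j y * g y‖ ≤ (C * D) * (y ^ p * Real.exp (-y)) := by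
    intro y hy
    rw [norm_mul]
    calc _ ≤ (C * Real.exp (-y)) * (D * y ^ p) :=
          mul_le_mul (hCb y hy) (hgb y hy) (norm_nonneg _) (by positivity)
      _ = _ := by ring
  constructor
  · refine Integrable.mono' ((rpow_exp_int p b hp hb).const_mul (C * D)) ?_ ?_
    · refine ContinuousOn.aestronglyMeasurable ?_ measurableSet_Ioi
      exact ((kap_cont a s ε y₀ (b / 2) j hs hc hε.le (by positivity) hsm).mono
        (Set.Ioi_subset_Ioi (by linarith))).mul (hg.mono Set.Ioi_subset_Ici_self)
    · filter_upwards [ae_restrict_mem measurableSet_Ioi] with y hy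
      exact hbd y (le_of_lt hy)
  · have h := (tendsto_rpow_mul_exp_neg_mul_atTop_nhds_zero p 1 one_pos).const_mul (C * D)
    simp only [neg_mul, one_mul, mul_zero] at h
    refine squeeze_zero_norm' ?_ h
    filter_upwards [eventually_ge_atTop b] with y hy using hbd y hy

def Tf (b a s : ℝ) (n : ℕ) (f : ℝ → ℂ) (m : ℕ) (ε y₀ : ℝ) : ℂ :=
  (∑ k ∈ Finset.range m, (-1) ^ (k + 1) * (kap a s ε y₀ (k + 1) b *
    iteratedDerivWithin k f (Set.Ici b) b)) +
  (-1) ^ m * ∫ y in Set.Ioi b, kap a s ε y₀ m y * iteratedDerivWithin m f (Set.Ici b) y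

lemma Cn_bound' (b : ℝ) (hb : 0 < b) (n : ℕ) (α : ℝ) (hα : 0 ≤ α) (f : ℝ → ℂ)
    (hf : MemCnAlpha b n α f) (k : ℕ) (hk : k ≤ n) :
    ∀ y, b ≤ y → ‖iteratedDerivWithin k f (Set.Ici b) y‖ ≤
      (((n - k : ℕ) : ℝ) + 1) * CnAlphaNorm b n α f * y ^ (((n - k : ℕ) : ℝ) + α) := by
  have := Cn_bound b hb n α hα f hf (n - k) (by omega)
  rwa [show n - (n - k) = k by omega] at this

lemma ibp (a s ε y₀ b : ℝ) (hs : s ^ 2 = 1) (hc : 0 < s * a) (hε : 0 < ε)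
    (hb : 0 < b) (hsm : 2 * ε * |y₀| ≤ s * a * (b / 2)) (n : ℕ) (α : ℝ) (hα : 0 ≤ α) (f : ℝ → ℂ)
    (hf : MemCnAlpha b n α f) (m : ℕ) (hm : m ≤ n) :
    ∫ y in Set.Ioi b, kap a s ε y₀ 0 y * f y = Tf b a s n f m ε y₀ := by
  induction m with
  | zero => simp [Tf]
  | succ m ih =>
    rw [ih (by omega)]
    have H := fun (i k : ℕ) (hk : k ≤ n) => kapg_int a s ε y₀ b _ _ i hs hc hε hb hsm _
      (Cn_cont b n f hf.1 k hk) (by positivity) (Cn_bound' b hb n α hα f hf k hk)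
    have hka : ∀ y, b ≤ y → HasDerivAt (kap a s ε y₀ (m + 1)) (kap a s ε y₀ m y) y :=
      fun y hy => kap_hasDerivAt a s ε y₀ y (b / 2) m hs hc hε.le (by positivity) hsm (by linarith)
    have key := integral_Ioi_mul_deriv_eq_deriv_mul (a := b)
      (u := kap a s ε y₀ (m + 1)) (u' := kap a s ε y₀ m)
      (v := iteratedDerivWithin m f (Set.Ici b)) (v' := iteratedDerivWithin (m + 1) f (Set.Ici b))
      (a' := kap a s ε y₀ (m + 1) b * iteratedDerivWithin m f (Set.Ici b) b) (b' := 0)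
      (fun y hy => hka y (le_of_lt hy))
      (fun y hy => (Cn_hasDeriv b n f hf.1 m (by omega) y (le_of_lt hy)).hasDerivAt
        (Ici_mem_nhds hy))
      (H (m + 1) (m + 1) hm).1 (H m m (by omega)).1
      (((hka b le_rfl).continuousAt.tendsto.mono_left nhdsWithin_le_nhds).mul
        ((Cn_cont b n f hf.1 m (by omega) b Set.self_mem_Ici).tendsto.mono_left
          (nhdsWithin_mono _ Set.Ioi_subset_Ici_self)))
      (H (m + 1) m (by omega)).2
    unfold Tf
    rw [Finset.sum_range_succ, key]
    ring

def Rf (b a s : ℝ) (n : ℕ) (α ε y₀ : ℝ) : ℝ :=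
  (∑ k ∈ Finset.range n, ‖kap a s ε y₀ (k + 1) b - kap a s 0 0 (k + 1) b‖ *
    b ^ ((n : ℝ) - k + α)) +
  ∫ y in Set.Ioi b, ‖kap a s ε y₀ n y - kap a s 0 0 n y‖ * y ^ α

lemma kap_bound2 (a s ε y₀ b y α : ℝ) (n : ℕ) (hs : s ^ 2 = 1) (hc : 0 < s * a) (hε : 0 ≤ ε)
    (hb : 0 < b) (hsm : 2 * ε * |y₀| ≤ s * a * (b / 2)) (hy : b ≤ y) :
    ‖kap a s ε y₀ n y‖ * y ^ α ≤ (‖om s‖ / (s * a)) ^ n * y ^ (α - n) := by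
  have hy0 : 0 < y := hb.trans_le hy
  have h1 := kap_bound a s ε y₀ y (b / 2) n hs hc hε (by positivity) hsm (by linarith)
  have h2 : Real.exp (-ε * (y - y₀) ^ 2) ≤ 1 := by
    apply Real.exp_le_one_iff.mpr
    have : 0 ≤ ε * (y - y₀) ^ 2 := by positivity
    linarith
  calc _ ≤ ((‖om s‖ / (s * a * y)) ^ n * 1) * y ^ α := by
        gcongr
        exact h1.trans (by gcongr)
    _ = _ := by
      rw [Real.rpow_sub hy0, Real.rpow_natCast, ← div_div, div_pow (‖om s‖ / (s * a)) y n]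
      ring

lemma kap_int2 (a s ε y₀ b α : ℝ) (n : ℕ) (hs : s ^ 2 = 1) (hc : 0 < s * a) (hε : 0 ≤ ε)
    (hb : 0 < b) (hsm : 2 * ε * |y₀| ≤ s * a * (b / 2)) (hn : α + 1 < n) (g : ℝ → ℂ)
    (hg : ContinuousOn g (Set.Ici b)) (D : ℝ) (hD : 0 ≤ D)
    (hgb : ∀ y, b ≤ y → ‖g y‖ ≤ D * y ^ α) :
    IntegrableOn (fun y => kap a s ε y₀ n y * g y) (Set.Ioi b) := by
  refine Integrable.mono' (((integrableOn_Ioi_rpow_of_lt (a := α - n) (by linarith) hb).const_mul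
    ((‖om s‖ / (s * a)) ^ n)).const_mul D) ?_ ?_
  · refine ContinuousOn.aestronglyMeasurable ?_ measurableSet_Ioi
    exact ((kap_cont a s ε y₀ (b / 2) n hs hc hε (by positivity) hsm).mono
      (Set.Ioi_subset_Ioi (by linarith))).mul (hg.mono Set.Ioi_subset_Ici_self)
  · filter_upwards [ae_restrict_mem measurableSet_Ioi] with y hy
    have h1 := kap_bound2 a s ε y₀ b y α n hs hc hε hb hsm (le_of_lt hy)
    have h2 := hgb y (le_of_lt hy)
    rw [norm_mul]
    calc _ ≤ ‖kap a s ε y₀ n y‖ * (D * y ^ α) := by gcongr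
      _ = D * (‖kap a s ε y₀ n y‖ * y ^ α) := by ring
      _ ≤ _ := by gcongr

lemma Rf_aux (a s ε y₀ b α : ℝ) (n : ℕ) (hs : s ^ 2 = 1) (hc : 0 < s * a) (hε : 0 ≤ ε)
    (hb : 0 < b) (hsm : 2 * ε * |y₀| ≤ s * a * (b / 2)) :
    AEStronglyMeasurable (fun y => ‖kap a s ε y₀ n y - kap a s 0 0 n y‖ * y ^ α)
      (volume.restrict (Set.Ioi b)) ∧
    ∀ᵐ y ∂(volume.restrict (Set.Ioi b)), ‖‖kap a s ε y₀ n y - kap a s 0 0 n y‖ * y ^ α‖ ≤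
      2 * ((‖om s‖ / (s * a)) ^ n * y ^ (α - n)) := by
  have hsm0 : 2 * (0 : ℝ) * |(0 : ℝ)| ≤ s * a * (b / 2) := by simp; positivity
  constructor
  · refine ContinuousOn.aestronglyMeasurable ?_ measurableSet_Ioi
    refine ContinuousOn.mul (ContinuousOn.norm (ContinuousOn.sub ?_ ?_)) ?_
    · exact (kap_cont a s ε y₀ (b / 2) n hs hc hε (by positivity) hsm).mono
        (Set.Ioi_subset_Ioi (by linarith))
    · exact (kap_cont a s 0 0 (b / 2) n hs hc le_rfl (by positivity) hsm0).mono
        (Set.Ioi_subset_Ioi (by linarith))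
    · exact fun y hy => (Real.continuousAt_rpow_const y α
        (Or.inl (hb.trans hy).ne')).continuousWithinAt
  · filter_upwards [ae_restrict_mem measurableSet_Ioi] with y hy
    have hy0 : 0 < y := hb.trans hy
    have h1 := kap_bound2 a s ε y₀ b y α n hs hc hε hb hsm (le_of_lt hy)
    have h2 := kap_bound2 a s 0 0 b y α n hs hc le_rfl hb hsm0 (le_of_lt hy)
    rw [norm_mul, norm_norm, Real.norm_of_nonneg (by positivity : 0 ≤ y ^ α)]
    calc _ ≤ (‖kap a s ε y₀ n y‖ + ‖kap a s 0 0 n y‖) * y ^ α := by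
          gcongr; exact norm_sub_le _ _
      _ ≤ _ := by linarith

lemma Rf_tendsto (a s y₀ b α : ℝ) (n : ℕ) (hs : s ^ 2 = 1) (hc : 0 < s * a)
    (hb : 0 < b) (hn : α + 1 < n) :
    Tendsto (fun ε => Rf b a s n α ε y₀) (𝓝[>] 0) (𝓝 0) := by
  have hk : ∀ (j : ℕ) (y : ℝ), b ≤ y →
      Tendsto (fun ε => ‖kap a s ε y₀ j y - kap a s 0 0 j y‖) (𝓝[>] 0) (𝓝 0) := by
    intro j y hy
    have := ((kap_tendsto a s y₀ y b j hs hc hb hy).sub_const (kap a s 0 0 j y)).norm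
    simpa using this
  have h1 : Tendsto (fun ε => ∑ k ∈ Finset.range n,
      ‖kap a s ε y₀ (k + 1) b - kap a s 0 0 (k + 1) b‖ * b ^ ((n : ℝ) - k + α)) (𝓝[>] 0)
      (𝓝 (∑ k ∈ Finset.range n, 0 * b ^ ((n : ℝ) - k + α))) :=
    tendsto_finsetSum _ fun k _ => (hk (k + 1) b le_rfl).mul_const _
  have h2 : Tendsto (fun ε => ∫ y in Set.Ioi b, ‖kap a s ε y₀ n y - kap a s 0 0 n y‖ * y ^ α)
      (𝓝[>] 0) (𝓝 (∫ y in Set.Ioi b, 0 * y ^ α)) := by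
    refine tendsto_integral_filter_of_dominated_convergence
      (fun y => 2 * ((‖om s‖ / (s * a)) ^ n * y ^ (α - n))) ?_ ?_ ?_ ?_
    · filter_upwards [small_ev y₀ (s * a * (b / 2)) (by positivity)] with ε ⟨h1, h2⟩
      exact (Rf_aux a s ε y₀ b α n hs hc h1.le hb h2).1
    · filter_upwards [small_ev y₀ (s * a * (b / 2)) (by positivity)] with ε ⟨h1, h2⟩
      exact (Rf_aux a s ε y₀ b α n hs hc h1.le hb h2).2
    · exact ((integrableOn_Ioi_rpow_of_lt (a := α - n) (by linarith) hb).const_mul _).const_mul _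
    · filter_upwards [ae_restrict_mem measurableSet_Ioi] with y hy
      exact (hk n y (le_of_lt hy)).mul_const _
  have := h1.add h2
  simpa [Rf] using this

lemma Tf_sub (a s ε y₀ b α : ℝ) (n : ℕ) (hs : s ^ 2 = 1) (hc : 0 < s * a) (hε : 0 ≤ ε)
    (hb : 0 < b) (hsm : 2 * ε * |y₀| ≤ s * a * (b / 2)) (hn : α + 1 < n) (f : ℝ → ℂ)
    (hf : MemCnAlpha b n α f) :
    ‖Tf b a s n f n ε y₀ - Tf b a s n f n 0 0‖ ≤ CnAlphaNorm b n α f * Rf b a s n α ε y₀ := by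
  have hsm0 : 2 * (0 : ℝ) * |(0 : ℝ)| ≤ s * a * (b / 2) := by simp; positivity
  have hN := Cn_nonneg b hb n α f
  have i1 := kap_int2 a s ε y₀ b α n hs hc hε hb hsm hn _ (Cn_cont b n f hf.1 n le_rfl) _ hN
    (Cn_top b hb n α f hf)
  have i2 := kap_int2 a s 0 0 b α n hs hc le_rfl hb hsm0 hn _ (Cn_cont b n f hf.1 n le_rfl) _ hN
    (Cn_top b hb n α f hf)
  have e : Tf b a s n f n ε y₀ - Tf b a s n f n 0 0 =
      (∑ k ∈ Finset.range n, (-1) ^ (k + 1) * ((kap a s ε y₀ (k + 1) b - kap a s 0 0 (k + 1) b) *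
        iteratedDerivWithin k f (Set.Ici b) b)) +
      (-1) ^ n * ∫ y in Set.Ioi b, (kap a s ε y₀ n y - kap a s 0 0 n y) *
        iteratedDerivWithin n f (Set.Ici b) y := by
    simp only [sub_mul, mul_sub, Finset.sum_sub_distrib]
    rw [integral_sub i1 i2]
    unfold Tf
    ring
  rw [e]
  unfold Rf
  rw [mul_add, Finset.mul_sum]
  refine (norm_add_le _ _).trans (add_le_add ?_ ?_)
  · refine (norm_sum_le _ _).trans (Finset.sum_le_sum fun k hk => ?_)
    have := Cn_bdry b hb n α f k (Finset.mem_range.mp hk)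
    simp only [norm_mul, norm_pow, norm_neg, norm_one, one_pow, one_mul]
    calc _ ≤ ‖kap a s ε y₀ (k + 1) b - kap a s 0 0 (k + 1) b‖ *
          (CnAlphaNorm b n α f * b ^ ((n : ℝ) - k + α)) := by gcongr
      _ = _ := by ring
  · simp only [norm_mul, norm_pow, norm_neg, norm_one, one_pow, one_mul]
    rw [← integral_const_mul]
    obtain ⟨m1, m2⟩ := Rf_aux a s ε y₀ b α n hs hc hε hb hsm
    refine norm_integral_le_of_norm_le (Integrable.const_mul (Integrable.mono'
      (((integrableOn_Ioi_rpow_of_lt (a := α - n) (by linarith) hb).const_mul _).const_mul 2)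
      m1 m2) _) ?_
    filter_upwards [ae_restrict_mem measurableSet_Ioi] with y hy
    have := Cn_top b hb n α f hf y (le_of_lt hy)
    rw [norm_mul]
    calc _ ≤ ‖kap a s ε y₀ n y - kap a s 0 0 n y‖ * (CnAlphaNorm b n α f * y ^ α) := by gcongr
      _ = _ := by ring

lemma local_bd (U : Set ℂ) (hU : IsOpen U) (b : ℝ) (hb : 0 < b) (f : ℂ → ℝ → ℂ) (n : ℕ) (α : ℝ)
    (hbd : ∀ z ∈ U, ∃ M : ℝ, ∀ᶠ w in 𝓝[U] z, CnAlphaNorm b n α (f w) ≤ M) (z : ℂ) (hz : z ∈ U) :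
    ∃ M r : ℝ, 0 ≤ M ∧ 0 < r ∧ ∀ w ∈ Metric.ball z r, w ∈ U ∧ CnAlphaNorm b n α (f w) ≤ M := by
  obtain ⟨M, hM⟩ := hbd z hz
  rw [hU.nhdsWithin_eq hz] at hM
  obtain ⟨r, hr, h⟩ := Metric.eventually_nhds_iff_ball.mp (Filter.Eventually.and (hU.mem_nhds hz) hM)
  refine ⟨M, r, ?_, hr, h⟩
  exact (Cn_nonneg b hb n α (f z)).trans (h z (Metric.mem_ball_self hr)).2

lemma psi_eps_diff (U : Set ℂ) (hU : IsOpen U) (a s ε y₀ b : ℝ) (hs : s ^ 2 = 1) (hc : 0 < s * a)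
    (hε : 0 < ε) (hb : 0 < b) (hsm : 2 * ε * |y₀| ≤ s * a * (b / 2))
    (f : ℂ → ℝ → ℂ)
    (hhol : ∀ y ∈ Set.Ici b, DifferentiableOn ℂ (fun z => f z y) U)
    (n : ℕ) (α : ℝ) (hα : 0 ≤ α)
    (hreg : ∀ z ∈ U, MemCnAlpha b n α (f z))
    (hbd : ∀ z ∈ U, ∃ M : ℝ, ∀ᶠ w in 𝓝[U] z, CnAlphaNorm b n α (f w) ≤ M) :
    DifferentiableOn ℂ (fun z => ∫ y in Set.Ioi b, kap a s ε y₀ 0 y * f z y) U := by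
  intro z hz
  obtain ⟨M, r, hM, hr, hball⟩ := local_bd U hU b hb f n α hbd z hz
  obtain ⟨C, hC, hCb⟩ := kapg_bound a s ε y₀ b 0 hs hc hε hb hsm
  set D := ((n : ℝ) + 1) * M with hD
  have hD0 : 0 ≤ D := by positivity
  have hf : ∀ w ∈ Metric.ball z r, ∀ y, b ≤ y → ‖f w y‖ ≤ D * y ^ ((n : ℝ) + α) := by
    intro w hw y hy
    have hy0 : 0 < y := hb.trans_le hy
    have h1 := Cn_bound' b hb n α hα (f w) (hreg w (hball w hw).1) 0 (Nat.zero_le n) y hy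
    simp only [iteratedDerivWithin_zero, Nat.sub_zero] at h1
    refine h1.trans ?_
    have := (hball w hw).2
    rw [hD]
    gcongr
  have hmeas : ∀ w ∈ U, AEStronglyMeasurable (fun y => kap a s ε y₀ 0 y * f w y)
      (volume.restrict (Set.Ioi b)) := by
    intro w hw
    refine ContinuousOn.aestronglyMeasurable ?_ measurableSet_Ioi
    exact ((kap_cont a s ε y₀ (b / 2) 0 hs hc hε.le (by positivity) hsm).mono
      (Set.Ioi_subset_Ioi (by linarith))).mul
      ((hreg w hw).1.continuousOn.mono Set.Ioi_subset_Ici_self)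
  have hdiff : ∀ y, b ≤ y → ∀ w ∈ U, DifferentiableAt ℂ (fun z => f z y) w :=
    fun y hy w hw => (hhol y hy w hw).differentiableAt (hU.mem_nhds hw)
  have key := hasDerivAt_integral_of_dominated_loc_of_deriv_le (𝕜 := ℂ)
    (μ := volume.restrict (Set.Ioi b)) (x₀ := z)
    (s := Metric.ball z (r / 2))
    (bound := fun y => (C * (D / (r / 4))) * (y ^ ((n : ℝ) + α) * Real.exp (-y)))
    (F := fun w y => kap a s ε y₀ 0 y * f w y)
    (F' := fun w y => kap a s ε y₀ 0 y * deriv (fun z => f z y) w)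
    (Metric.ball_mem_nhds z (by positivity))
    (by filter_upwards [hU.mem_nhds hz] with w hw using hmeas w hw)
    (kapg_int a s ε y₀ b _ _ 0 hs hc hε hb hsm (f z) (hreg z hz).1.continuousOn
      (by positivity) (hf z (Metric.mem_ball_self hr))).1
    ?_ ?_ ((rpow_exp_int _ b (by positivity) hb).const_mul _) ?_
  · exact key.2.differentiableAt.differentiableWithinAt
  · -- measurability of the derivative
    have hseq : Tendsto (fun k : ℕ => (((r / 2) / ((k : ℝ) + 1) : ℝ) : ℂ)) atTop (𝓝[≠] 0) := by
      rw [tendsto_nhdsWithin_iff]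
      constructor
      · have h1 : Tendsto (fun k : ℕ => (r / 2) / ((k : ℝ) + 1)) atTop (𝓝 0) := by
          have := (tendsto_one_div_add_atTop_nhds_zero_nat (𝕜 := ℝ)).const_mul (r / 2)
          simpa [div_eq_mul_inv] using this
        have := (Complex.continuous_ofReal.tendsto 0).comp h1
        simpa [Function.comp_def] using this
      · refine Eventually.of_forall fun k => ?_
        have : (r / 2) / ((k : ℝ) + 1) ≠ 0 := by positivity
        simpa using (Complex.ofReal_ne_zero.mpr this)
    refine aestronglyMeasurable_of_tendsto_ae (u := (atTop : Filter ℕ))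
      (f := fun k y => (((r / 2) / ((k : ℝ) + 1) : ℝ) : ℂ)⁻¹ *
        (kap a s ε y₀ 0 y * f (z + (((r / 2) / ((k : ℝ) + 1) : ℝ) : ℂ)) y - kap a s ε y₀ 0 y * f z y))
      (fun k => ?_) ?_
    · refine AEStronglyMeasurable.const_mul (AEStronglyMeasurable.sub (hmeas _ ?_) (hmeas _ hz)) _
      refine (hball _ ?_).1
      rw [Metric.mem_ball, dist_self_add_left, Complex.norm_real, Real.norm_of_nonneg (by positivity)]
      calc (r / 2) / ((k : ℝ) + 1) ≤ r / 2 := div_le_self (by positivity) (by simp)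
        _ < r := by linarith
    · filter_upwards [ae_restrict_mem measurableSet_Ioi] with y hy
      have h1 := (hdiff y (le_of_lt hy) z hz).hasDerivAt.const_mul (kap a s ε y₀ 0 y)
      have h2 := (hasDerivAt_iff_tendsto_slope_zero.mp h1).comp hseq
      simpa [Function.comp_def] using! h2
  · filter_upwards [ae_restrict_mem measurableSet_Ioi] with y hy w hw
    have hy' : b ≤ y := le_of_lt hy
    have hsub : Metric.closedBall w (r / 4) ⊆ Metric.ball z r := by
      refine Metric.closedBall_subset_ball' ?_
      have := Metric.mem_ball.mp hw
      linarith
    have h1 : ‖deriv (fun z => f z y) w‖ ≤ D * y ^ ((n : ℝ) + α) / (r / 4) := by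
      refine Complex.norm_deriv_le_of_forall_mem_sphere_norm_le (by positivity) ?_ ?_
      · refine DifferentiableOn.diffContOnCl ?_
        rw [closure_ball _ (by positivity)]
        exact (hhol y hy').mono fun x hx => (hball x (hsub hx)).1
      · exact fun x hx => hf x (hsub (Metric.sphere_subset_closedBall hx)) y hy'
    rw [norm_mul]
    calc _ ≤ (C * Real.exp (-y)) * (D * y ^ ((n : ℝ) + α) / (r / 4)) :=
          mul_le_mul (hCb y hy') h1 (norm_nonneg _) (by positivity)
      _ = _ := by ring
  · filter_upwards [ae_restrict_mem measurableSet_Ioi] with y hy w hw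
    have hw' : w ∈ U := (hball w (Metric.ball_subset_ball (by linarith) hw)).1
    exact (hdiff y (le_of_lt hy) w hw').hasDerivAt.const_mul (kap a s ε y₀ 0 y)

/-- holomorphic dependence of the oscillatory integral on a complex parameter. -/
theorem stmt16 (U : Set ℂ) (hU : IsOpen U) (a : ℝ) (ha : a ≠ 0) (b : ℝ) (hb : 0 < b)
    (f : ℂ → ℝ → ℂ)
    (hhol : ∀ y ∈ Set.Ici b, DifferentiableOn ℂ (fun z => f z y) U)
    (n : ℕ) (α : ℝ) (hα : 0 ≤ α) (hn : α + 1 < n)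
    (hreg : ∀ z ∈ U, MemCnAlpha b n α (f z))
    (hbd : ∀ z ∈ U, ∃ M : ℝ, ∀ᶠ w in 𝓝[U] z, CnAlphaNorm b n α (f w) ≤ M) :
    ∃ ψ : ℂ → ℂ,
      (∀ z ∈ U, ∀ y₀ : ℝ,
        Filter.Tendsto (fun ε : ℝ => ∫ y in Set.Ioi b,
            Complex.exp (-(ε : ℂ) * (y - y₀) ^ 2) * Complex.exp (Complex.I * a * y ^ 2) * f z y)
          (𝓝[>] 0) (𝓝 (ψ z))) ∧
      DifferentiableOn ℂ ψ U := by
  obtain ⟨s, hs, hc⟩ : ∃ s : ℝ, s ^ 2 = 1 ∧ 0 < s * a := by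
    rcases lt_or_gt_of_ne ha with h | h
    · exact ⟨-1, by norm_num, by linarith⟩
    · exact ⟨1, by norm_num, by linarith⟩
  have hint : ∀ (ε y₀ : ℝ) (z : ℂ), (∫ y in Set.Ioi b,
      Complex.exp (-(ε : ℂ) * (y - y₀) ^ 2) * Complex.exp (Complex.I * a * y ^ 2) * f z y) =
      ∫ y in Set.Ioi b, kap a s ε y₀ 0 y * f z y := by
    intro ε y₀ z
    simp only [kap, Ph, Complex.exp_add]
  have hdist : ∀ y₀ : ℝ, ∀ᶠ ε in 𝓝[>] (0 : ℝ), ∀ z ∈ U,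
      ‖(∫ y in Set.Ioi b, kap a s ε y₀ 0 y * f z y) - Tf b a s n (f z) n 0 0‖ ≤
        CnAlphaNorm b n α (f z) * Rf b a s n α ε y₀ := by
    intro y₀
    filter_upwards [small_ev y₀ (s * a * (b / 2)) (by positivity)] with ε ⟨h1, h2⟩ z hz
    rw [ibp a s ε y₀ b hs hc h1 hb h2 n α hα (f z) (hreg z hz) n le_rfl]
    exact Tf_sub a s ε y₀ b α n hs hc h1.le hb h2 hn (f z) (hreg z hz)
  refine ⟨fun z => Tf b a s n (f z) n 0 0, ?_, ?_⟩
  · intro z hz y₀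
    simp only [hint]
    rw [tendsto_iff_norm_sub_tendsto_zero]
    have hR := (Rf_tendsto a s y₀ b α n hs hc hb hn).const_mul (CnAlphaNorm b n α (f z))
    rw [mul_zero] at hR
    refine squeeze_zero' (Eventually.of_forall fun _ => norm_nonneg _) ?_ hR
    filter_upwards [hdist y₀] with ε h using h z hz
  · refine TendstoLocallyUniformlyOn.differentiableOn (φ := 𝓝[>] (0 : ℝ))
      (F := fun ε z => ∫ y in Set.Ioi b, kap a s ε 0 0 y * f z y) ?_ ?_ hU
    · rw [Metric.tendstoLocallyUniformlyOn_iff]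
      intro e he z hz
      obtain ⟨M, r, hM, hr, hball⟩ := local_bd U hU b hb f n α hbd z hz
      refine ⟨Metric.ball z r, mem_nhdsWithin_of_mem_nhds (Metric.ball_mem_nhds z hr), ?_⟩
      have hR := ((Rf_tendsto a s 0 b α n hs hc hb hn).abs).const_mul M
      rw [abs_zero, mul_zero] at hR
      filter_upwards [hdist 0, hR.eventually_lt_const he] with ε h1 h2 w hw
      rw [dist_comm, dist_eq_norm]
      refine lt_of_le_of_lt ((h1 w (hball w hw).1).trans ?_) h2
      have hN := Cn_nonneg b hb n α (f w)
      calc _ ≤ CnAlphaNorm b n α (f w) * |Rf b a s n α ε 0| := by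
            gcongr; exact le_abs_self _
        _ ≤ _ := by gcongr; exact (hball w hw).2
    · filter_upwards [small_ev 0 (s * a * (b / 2)) (by positivity)] with ε ⟨h1, h2⟩
      exact psi_eps_diff U hU a s ε 0 b hs hc h1 hb h2 f hhol n α hα hreg hbd
end
end

section
/- Let T∈(0,∞], let V:(0,T)×ℝ→ℂ be measurable, and let G:(0,T)×ℝ×ℝ→ℂ satisfy conditions (i)–(iii) of the Green's function assumption (as in the preceding context) with parameters α≥0 and n∈ℕ, n>α+3. Let 0≤β<n−α−3 and let F and a sequence (F_m) in C^n(ℝ,r^β) satisfy lim_{m→∞} ‖F−F_m‖_{C^n(ℝ,r^β)} = 0. Denote by Ψ(t,x;F) := lim_{ε→0⁺} ∫_ℝ e^{−εy²} G(t,x,y) F(y) dy the corresponding solutions. Then lim_{m→∞} Ψ(t,x;F_m) = Ψ(t,x;F), and the convergence is locally uniform on (0,T)×ℝ. -/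
open Set Filter MeasureTheory Topology ENNReal

noncomputable section

/-- Membership in the space `C^n(ℝ, r^α)` with `r(y) = 1 + |y|`: `f` is `n`-times continuously
differentiable on `ℝ` and all derivatives up to order `n` satisfy a bound `M·(1+|y|)^α`. -/
def MemCnR (n : ℕ) (α : ℝ) (f : ℝ → ℂ) : Prop :=
  ContDiff ℝ n f ∧
    ∃ M : ℝ, 0 ≤ M ∧ ∀ k ≤ n, ∀ y : ℝ, ‖iteratedDeriv k f y‖ ≤ M * (1 + |y|) ^ α

/-- The norm on the space `C^n(ℝ, r^α)`. -/
def CnRNorm (n : ℕ) (α : ℝ) (f : ℝ → ℂ) : ℝ :=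
  ⨆ k : Fin (n + 1), ⨆ y : ℝ, ‖iteratedDeriv (k : ℕ) f y‖ / (1 + |y|) ^ α

/-- Absolute continuity of `g` on a set `I ⊆ ℝ`: `g` is an indefinite integral of a locally
integrable function `h` on `I`. -/
def IsACOn {E : Type*} [NormedAddCommGroup E] [NormedSpace ℝ E] (I : Set ℝ) (g : ℝ → E) : Prop :=
  ∃ h : ℝ → E, MeasureTheory.LocallyIntegrableOn h I ∧
    ∀ s₁ ∈ I, ∀ s₂ ∈ I, s₁ < s₂ → g s₂ - g s₁ = ∫ s in s₁..s₂, h s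

/-- The space `AC_{1,2}(S × ℝ)`: `Ψ(·,x)` is absolutely continuous on the time set `S` for every
`x`, and `Ψ(t,·)`, `∂Ψ/∂x(t,·)` are absolutely continuous on `ℝ` for every `t ∈ S`. -/
def MemAC12 (S : Set ℝ) (Ψ : ℝ → ℝ → ℂ) : Prop :=
  (∀ x : ℝ, IsACOn S (fun t => Ψ t x)) ∧
    ∀ t ∈ S, IsACOn Set.univ (Ψ t) ∧ IsACOn Set.univ (deriv (Ψ t))

/-- quantitative membership -/
def Bd (k : ℕ) (γ M : ℝ) (f : ℝ → ℂ) : Prop :=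
  ContDiff ℝ k f ∧ ∀ j ≤ k, ∀ y : ℝ, ‖iteratedDeriv j f y‖ ≤ M * (1 + |y|) ^ γ

lemma one_le_r (y : ℝ) : 1 ≤ 1 + |y| := by linarith [abs_nonneg y]

lemma Bd.nonneg {k : ℕ} {γ M : ℝ} {f : ℝ → ℂ} (h : Bd k γ M f) : 0 ≤ M := by
  have := h.2 0 (Nat.zero_le _) 0
  simp at this
  exact (norm_nonneg _).trans this

lemma Bd.bound {k : ℕ} {γ M : ℝ} {f : ℝ → ℂ} (h : Bd k γ M f) (y : ℝ) :
    ‖f y‖ ≤ M * (1 + |y|) ^ γ := by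
  simpa using h.2 0 (Nat.zero_le _) y

lemma Bd.mono {k k' : ℕ} {γ γ' M M' : ℝ} {f : ℝ → ℂ} (h : Bd k γ M f) (hk : k' ≤ k)
    (hγ : γ ≤ γ') (hM : M ≤ M') : Bd k' γ' M' f := by
  refine ⟨h.1.of_le (by exact_mod_cast hk), fun j hj y => (h.2 j (hj.trans hk) y).trans ?_⟩
  have := h.nonneg
  have h1 := Real.rpow_le_rpow_of_exponent_le (one_le_r y) hγ
  have h2 : 0 ≤ (1 + |y|) ^ γ := Real.rpow_nonneg (by positivity) _
  exact mul_le_mul hM h1 h2 (this.trans hM)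

lemma Bd.deriv {k : ℕ} {γ M : ℝ} {f : ℝ → ℂ} (h : Bd (k + 1) γ M f) : Bd k γ M (deriv f) := by
  refine ⟨?_, fun j hj y => ?_⟩
  · have := h.1
    push_cast at this
    exact (contDiff_succ_iff_deriv.1 this).2.2
  · rw [← iteratedDeriv_succ']
    exact h.2 (j + 1) (by omega) y

lemma Bd.succ {k : ℕ} {γ M : ℝ} {f g : ℝ → ℂ} (h0 : ∀ y, ‖f y‖ ≤ M * (1 + |y|) ^ γ)
    (hd : ∀ y, HasDerivAt f (g y) y) (hg : Bd k γ M g) : Bd (k + 1) γ M f := by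
  have hgd : _root_.deriv f = g := funext fun y => (hd y).deriv
  refine ⟨?_, fun j hj y => ?_⟩
  · push_cast
    refine contDiff_succ_iff_deriv.2 ⟨fun y => (hd y).differentiableAt, by simp, ?_⟩
    rw [hgd]; exact hg.1
  · rcases j with _ | j
    · simpa using h0 y
    · rw [iteratedDeriv_succ', hgd]
      exact hg.2 j (by omega) y

lemma Bd.zero {γ M : ℝ} {f : ℝ → ℂ} (h0 : ∀ y, ‖f y‖ ≤ M * (1 + |y|) ^ γ)
    (hd : Continuous f) : Bd 0 γ M f := by
  refine ⟨by simpa using (contDiff_zero (𝕜 := ℝ)).2 hd, fun j hj y => ?_⟩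
  obtain rfl : j = 0 := by omega
  simpa using h0 y

lemma Bd.sub {k : ℕ} {γ M M' : ℝ} {f g : ℝ → ℂ} (hf : Bd k γ M f) (hg : Bd k γ M' g) :
    Bd k γ (M + M') (fun y => f y - g y) := by
  refine ⟨hf.1.sub hg.1, fun j hj y => ?_⟩
  have h1 := (hf.1.of_le (by exact_mod_cast hj : (j : WithTop ℕ∞) ≤ k)).contDiffAt (x := y)
  have h2 := (hg.1.of_le (by exact_mod_cast hj : (j : WithTop ℕ∞) ≤ k)).contDiffAt (x := y)
  have := iteratedDeriv_sub h1 h2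
  have e : (fun y => f y - g y) = f - g := rfl
  rw [e, this, add_mul]
  exact (norm_sub_le _ _).trans (add_le_add (hf.2 j hj y) (hg.2 j hj y))

lemma Bd.mul {k : ℕ} {γ δ M M' : ℝ} {f g : ℝ → ℂ} (hf : Bd k γ M f) (hg : Bd k δ M' g) :
    Bd k (γ + δ) (2 ^ k * (M * M')) (fun y => f y * g y) := by
  refine ⟨hf.1.mul hg.1, fun j hj y => ?_⟩
  have h1 := (hf.1.of_le (by exact_mod_cast hj : (j : WithTop ℕ∞) ≤ k)).contDiffAt (x := y)
  have h2 := (hg.1.of_le (by exact_mod_cast hj : (j : WithTop ℕ∞) ≤ k)).contDiffAt (x := y)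
  have := iteratedDeriv_mul h1 h2
  have e : (fun y => f y * g y) = f * g := rfl
  have hM := hf.nonneg
  have hM' := hg.nonneg
  have hr : 0 < 1 + |y| := by positivity
  rw [e, this, Real.rpow_add hr]
  have hR1 : 0 ≤ (1 + |y|) ^ γ := by positivity
  have hR2 : 0 ≤ (1 + |y|) ^ δ := by positivity
  calc _ ≤ ∑ i ∈ Finset.range (j + 1), (j.choose i : ℝ) * ((M * (1 + |y|) ^ γ) * (M' * (1 + |y|) ^ δ)) := by
        refine (norm_sum_le _ _).trans (Finset.sum_le_sum fun i hi => ?_)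
        have hi' := Finset.mem_range.1 hi
        rw [mul_assoc, norm_mul, norm_mul, Complex.norm_natCast]
        refine mul_le_mul_of_nonneg_left ?_ (by positivity)
        exact mul_le_mul (hf.2 i (by omega) y) (hg.2 (j - i) (by omega) y) (norm_nonneg _) (by positivity)
    _ = 2 ^ j * (M * M' * ((1 + |y|) ^ γ * (1 + |y|) ^ δ)) := by
        rw [← Finset.sum_mul, ← Nat.cast_sum, Nat.sum_range_choose]
        push_cast; ring
    _ ≤ 2 ^ k * (M * M' * ((1 + |y|) ^ γ * (1 + |y|) ^ δ)) := by
        refine mul_le_mul_of_nonneg_right ?_ (by positivity)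
        exact pow_le_pow_right₀ (by norm_num) hj
    _ = _ := by ring

lemma Bd_const (k : ℕ) (c : ℂ) : Bd k 0 ‖c‖ (fun _ => c) := by
  refine ⟨contDiff_const, fun j hj y => ?_⟩
  rw [iteratedDeriv_const]
  split_ifs <;> simp

lemma Bd_lin (k : ℕ) (c : ℂ) (x : ℝ) :
    Bd k 1 (‖c‖ * (1 + |x|)) (fun y : ℝ => c * ((y : ℂ) - x)) := by
  have h0 : ∀ y : ℝ, ‖c * ((y : ℂ) - x)‖ ≤ ‖c‖ * (1 + |x|) * (1 + |y|) ^ (1 : ℝ) := by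
    intro y
    rw [norm_mul, Real.rpow_one, mul_assoc]
    refine mul_le_mul_of_nonneg_left ?_ (norm_nonneg _)
    rw [← Complex.ofReal_sub, Complex.norm_real, Real.norm_eq_abs]
    have := abs_sub y x
    nlinarith [abs_nonneg x, abs_nonneg y, mul_nonneg (abs_nonneg x) (abs_nonneg y)]
  have hd : ∀ y : ℝ, HasDerivAt (fun y : ℝ => c * ((y : ℂ) - x)) c y := by
    intro y
    have := ((Complex.ofRealCLM.hasDerivAt (x := y)).sub_const (x : ℂ)).const_mul c
    simpa using this
  refine (Bd.succ (k := k) h0 hd ?_).mono (Nat.le_succ k) le_rfl le_rfl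
  exact (Bd_const k c).mono le_rfl (by norm_num)
    (le_mul_of_one_le_right (norm_nonneg _) (one_le_r x))

lemma Bd_of_Mem {n : ℕ} {γ : ℝ} {f : ℝ → ℂ} (h : MemCnR n γ f) : Bd n γ (CnRNorm n γ f) f := by
  obtain ⟨h1, M, hM, hb⟩ := h
  refine ⟨h1, fun j hj y => ?_⟩
  have hr : 0 < (1 + |y|) ^ γ := Real.rpow_pos_of_pos (by positivity) _
  rw [← div_le_iff₀ hr]
  have hB : ∀ k : Fin (n + 1), BddAbove (range fun y : ℝ => ‖iteratedDeriv (k : ℕ) f y‖ / (1 + |y|) ^ γ) := by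
    intro k
    refine ⟨M, ?_⟩
    rintro _ ⟨z, rfl⟩
    have hr : 0 < (1 + |z|) ^ γ := Real.rpow_pos_of_pos (by positivity) _
    exact (div_le_iff₀ hr).2 (hb k (by omega) z)
  have e1 := le_ciSup (hB ⟨j, by omega⟩) y
  have e2 := le_ciSup (f := fun k : Fin (n + 1) => ⨆ y : ℝ, ‖iteratedDeriv (k : ℕ) f y‖ / (1 + |y|) ^ γ)
    (Set.finite_range _).bddAbove ⟨j, by omega⟩
  exact e1.trans e2

/-- weight -/
def wgt (a x y : ℝ) : ℂ := (1 + 2 * Complex.I * a * ((y : ℂ) - x) ^ 2)⁻¹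

lemma wgt_den (a x y : ℝ) : ‖(1 + 2 * Complex.I * a * ((y : ℂ) - x) ^ 2)‖ ^ 2
    = 1 + (2 * a * (y - x) ^ 2) ^ 2 := by
  have : (1 + 2 * Complex.I * a * ((y : ℂ) - x) ^ 2) = ((1 : ℝ) : ℂ) + ((2 * a * (y - x) ^ 2 : ℝ) : ℂ) * Complex.I := by
    push_cast; ring
  rw [this, ← Complex.normSq_eq_norm_sq, Complex.normSq_add_mul_I]; ring

lemma wgt_ne (a x y : ℝ) : (1 + 2 * Complex.I * a * ((y : ℂ) - x) ^ 2) ≠ 0 := by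
  intro h
  have := wgt_den a x y
  rw [h] at this
  simp at this
  nlinarith [sq_nonneg (2 * a * (y - x) ^ 2)]

lemma wgt_deriv (a x y : ℝ) : HasDerivAt (wgt a x)
    ((-4 * Complex.I * a) * ((y : ℂ) - x) * (wgt a x y * wgt a x y)) y := by
  have h1 : HasDerivAt (fun y : ℝ => (y : ℂ) - x) 1 y := by
    simpa using (Complex.ofRealCLM.hasDerivAt (x := y)).sub_const (x : ℂ)
  have h2 := (((h1.pow 2).const_mul (2 * Complex.I * a)).const_add 1).inv (wgt_ne a x y)
  refine h2.congr_deriv ?_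
  simp only [wgt, Pi.pow_apply, div_eq_mul_inv, ← inv_pow]
  generalize (1 + 2 * Complex.I * a * ((y : ℂ) - x) ^ 2)⁻¹ = D
  norm_num
  ring

lemma wgt_bound {a0 X : ℝ} (ha0 : 0 < a0) (hX : 0 ≤ X) : ∃ C, 0 ≤ C ∧ ∀ a x : ℝ, a0 ≤ a → |x| ≤ X →
    ∀ y, ‖wgt a x y‖ ≤ C * (1 + |y|) ^ (-2 : ℝ) := by
  refine ⟨2 * (1 + X) ^ 2 + 2 / a0, by positivity, fun a x ha hx y => ?_⟩
  have hr : 0 < 1 + |y| := by positivity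
  rw [Real.rpow_neg hr.le, wgt, norm_inv]
  have hd := wgt_den a x y
  set D := ‖(1 + 2 * Complex.I * a * ((y : ℂ) - x) ^ 2)‖
  have hDp : 0 < D := norm_pos_iff.2 (wgt_ne a x y)
  have e : (1 + |y|) ^ (2 : ℝ) = (1 + |y|) ^ 2 := by norm_cast
  rw [e, ← div_eq_mul_inv, inv_eq_one_div, div_le_div_iff₀ hDp (by positivity), one_mul]
  have hD1 : 1 ≤ D := by nlinarith [sq_nonneg (2 * a * (y - x) ^ 2)]
  have hD2 : 2 * a0 * (y - x) ^ 2 ≤ D := by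
    have : 2 * a * (y - x) ^ 2 ≤ D := by
      apply le_of_sq_le_sq _ hDp.le
      linarith
    nlinarith [sq_nonneg (y - x)]
  have h3 : 1 + |y| ≤ (1 + X) + |y - x| := by
    have : |y| ≤ |y - x| + |x| := by simpa using abs_add_le (y - x) x
    linarith
  have h4 : (1 + |y|) ^ 2 ≤ 2 * (1 + X) ^ 2 + 2 * (y - x) ^ 2 := by
    have : |y - x| ^ 2 = (y - x) ^ 2 := sq_abs _
    nlinarith [sq_nonneg ((1 + X) - |y - x|), abs_nonneg (y - x)]
  have h5 : 2 * (y - x) ^ 2 ≤ 2 / a0 * D := by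
    rw [div_mul_eq_mul_div, le_div_iff₀ ha0]
    nlinarith [sq_nonneg (y - x)]
  nlinarith [sq_nonneg (1 + X)]

lemma wgt_Bd {a0 a1 X : ℝ} (ha0 : 0 < a0) (hX : 0 ≤ X) (k : ℕ) : ∃ C, 0 ≤ C ∧ ∀ a x : ℝ,
    a0 ≤ a → a ≤ a1 → |x| ≤ X → Bd k (-2) C (wgt a x) := by
  obtain ⟨C0, hC0, h0⟩ := wgt_bound ha0 hX
  induction k with
  | zero =>
    refine ⟨C0, hC0, fun a x ha _ hx => Bd.zero (h0 a x ha hx) ?_⟩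
    exact continuous_iff_continuousAt.2 fun y => (wgt_deriv a x y).continuousAt
  | succ k ih =>
    obtain ⟨C, hC, h⟩ := ih
    refine ⟨max C0 (2 ^ k * ((4 * |a1| * (1 + X)) * (2 ^ k * (C * C)))), by positivity, fun a x ha ha1 hx => ?_⟩
    refine Bd.succ (fun y => (h0 a x ha hx y).trans ?_) (wgt_deriv a x) ?_
    · exact mul_le_mul_of_nonneg_right (le_max_left _ _) (by positivity)
    · have hl := Bd_lin k (-4 * Complex.I * a) x
      have hl' : Bd k 1 (4 * |a1| * (1 + X)) (fun y : ℝ => (-4 * Complex.I * a) * ((y : ℂ) - x)) := by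
        refine hl.mono le_rfl le_rfl ?_
        have : ‖(-4 * Complex.I * a : ℂ)‖ = 4 * a := by simp [abs_of_pos (ha0.trans_le ha)]
        rw [this]
        have : a ≤ |a1| := ha1.trans (le_abs_self _)
        gcongr
      exact (hl'.mul ((h a x ha ha1 hx).mul (h a x ha ha1 hx))).mono le_rfl (by norm_num) (le_max_right _ _)

/-- the transposed operator -/
def Lop (a x : ℝ) (A : ℝ → ℂ) : ℝ → ℂ :=
  fun y => (-1 * ((y : ℂ) - x)) * deriv (fun u => wgt a x u * A u) y

/-- the phase -/
def phs (a x y : ℝ) : ℂ := Complex.exp (Complex.I * a * ((y : ℂ) - x) ^ 2)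

lemma phs_norm (a x y : ℝ) : ‖phs a x y‖ = 1 := by
  have : Complex.I * a * ((y : ℂ) - x) ^ 2 = ((a * (y - x) ^ 2 : ℝ) : ℂ) * Complex.I := by
    push_cast; ring
  rw [phs, this, Complex.norm_exp_ofReal_mul_I]

lemma phs_deriv (a x y : ℝ) : HasDerivAt (phs a x)
    ((2 * Complex.I * a) * ((y : ℂ) - x) * phs a x y) y := by
  have h1 : HasDerivAt (fun y : ℝ => (y : ℂ) - x) 1 y := by
    simpa using (Complex.ofRealCLM.hasDerivAt (x := y)).sub_const (x : ℂ)
  have h2 := ((h1.pow 2).const_mul (Complex.I * a)).cexp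
  refine h2.congr_deriv ?_
  simp [phs]
  ring

lemma phs_cont (a x : ℝ) : Continuous (phs a x) :=
  continuous_iff_continuousAt.2 fun y => (phs_deriv a x y).continuousAt

lemma Lop_Bd {a0 a1 X : ℝ} (ha0 : 0 < a0) (hX : 0 ≤ X) (k : ℕ) : ∃ C, 0 ≤ C ∧ ∀ a x : ℝ,
    a0 ≤ a → a ≤ a1 → |x| ≤ X → ∀ (γ M : ℝ) (A : ℝ → ℂ), Bd (k + 1) γ M A →
      Bd k (γ - 1) (C * M) (Lop a x A) := by
  obtain ⟨C, hC, h⟩ := wgt_Bd (a1 := a1) ha0 hX (k + 1)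
  refine ⟨2 ^ k * ((1 + X) * (2 ^ (k + 1) * C)), by positivity, fun a x ha ha1 hx γ M A hA => ?_⟩
  have h1 := ((h a x ha ha1 hx).mul hA).deriv
  have h2 := (Bd_lin k (-1) x).mul h1
  have hM := hA.nonneg
  refine h2.mono le_rfl (by linarith) ?_
  rw [norm_neg, norm_one, one_mul, mul_assoc (2 ^ k), mul_assoc (1 + X), mul_assoc (2 ^ (k + 1))]
  gcongr

lemma Lop_iter_Bd {a0 a1 X : ℝ} (ha0 : 0 < a0) (hX : 0 ≤ X) (k : ℕ) : ∃ C, 0 ≤ C ∧ ∀ a x : ℝ,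
    a0 ≤ a → a ≤ a1 → |x| ≤ X → ∀ (γ M : ℝ) (A : ℝ → ℂ), Bd k γ M A →
      Bd 0 (γ - k) (C * M) ((Lop a x)^[k] A) := by
  induction k with
  | zero => exact ⟨1, by norm_num, fun a x _ _ _ γ M A hA => by simpa using hA⟩
  | succ k ih =>
    obtain ⟨C, hC, h⟩ := ih
    obtain ⟨C', hC', h'⟩ := Lop_Bd (a1 := a1) ha0 hX k
    refine ⟨C * C', by positivity, fun a x ha ha1 hx γ M A hA => ?_⟩
    rw [Function.iterate_succ_apply]
    have := h a x ha ha1 hx _ _ _ (h' a x ha ha1 hx _ _ _ hA)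
    rw [mul_assoc]
    refine this.mono le_rfl ?_ le_rfl
    push_cast; linarith

lemma wgt_contDiff {a x : ℝ} (ha : 0 < a) (k : ℕ) : ContDiff ℝ k (wgt a x) := by
  obtain ⟨C, _, h⟩ := wgt_Bd (a1 := a) ha (abs_nonneg x) k
  exact (h a x le_rfl le_rfl le_rfl).1

lemma Lop_contDiff {a x : ℝ} (ha : 0 < a) (k : ℕ) {A : ℝ → ℂ} (hA : ContDiff ℝ ((k + 1 : ℕ)) A) :
    ContDiff ℝ k (Lop a x A) := by
  have h1 := (wgt_contDiff (x := x) ha (k + 1)).mul hA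
  push_cast at h1
  exact (Bd_lin k (-1) x).1.mul (contDiff_succ_iff_deriv.1 h1).2.2

lemma Lop_sub {a x : ℝ} (ha : 0 < a) {A B : ℝ → ℂ} (hA : Differentiable ℝ A)
    (hB : Differentiable ℝ B) :
    Lop a x (fun y => A y - B y) = fun y => Lop a x A y - Lop a x B y := by
  funext y
  have hw : DifferentiableAt ℝ (wgt a x) y := (wgt_deriv a x y).differentiableAt
  have : deriv (fun u => wgt a x u * (A u - B u)) y =
    deriv (fun u => wgt a x u * A u) y - deriv (fun u => wgt a x u * B u) y := by
    rw [← deriv_fun_sub (hw.fun_mul (hA y)) (hw.fun_mul (hB y))]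
    congr 1
    funext u
    ring
  simp only [Lop, this]
  ring

lemma Lop_iter_sub {a x : ℝ} (ha : 0 < a) (k : ℕ) : ∀ {A B : ℝ → ℂ}, ContDiff ℝ k A →
    ContDiff ℝ k B →
    (Lop a x)^[k] (fun y => A y - B y) = fun y => (Lop a x)^[k] A y - (Lop a x)^[k] B y := by
  induction k with
  | zero => intro A B _ _; rfl
  | succ k ih =>
    intro A B hA hB
    simp only [Function.iterate_succ_apply]
    rw [Lop_sub ha (hA.differentiable (by simp)) (hB.differentiable (by simp))]
    exact ih (Lop_contDiff ha k hA) (Lop_contDiff ha k hB)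

lemma int_r {γ : ℝ} (hγ : γ < -1) : Integrable (fun y : ℝ => (1 + |y|) ^ γ) := by
  have := integrable_one_add_norm (E := ℝ) (μ := volume) (r := -γ) (by simp; linarith)
  simpa using this

lemma Bd.integrable {a x : ℝ} {k : ℕ} {γ M : ℝ} {A : ℝ → ℂ} (hγ : γ < -1) (h : Bd k γ M A) :
    Integrable (fun y => phs a x y * A y) := by
  refine ((int_r hγ).const_mul M).mono'
    ((phs_cont a x).mul h.1.continuous).aestronglyMeasurable (ae_of_all _ fun y => ?_)
  rw [norm_mul, phs_norm, one_mul]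
  exact h.bound y

lemma Bd.norm_integral {a x : ℝ} {k : ℕ} {γ M : ℝ} {A : ℝ → ℂ} (hγ : γ < -1) (h : Bd k γ M A) :
    ‖∫ y, phs a x y * A y‖ ≤ M * ∫ y : ℝ, (1 + |y|) ^ γ := by
  rw [← integral_const_mul]
  refine norm_integral_le_of_norm_le ((int_r hγ).const_mul M) (ae_of_all _ fun y => ?_)
  rw [norm_mul, phs_norm, one_mul]
  exact h.bound y

lemma ibp_s18 {a x : ℝ} (ha : 0 < a) {M : ℝ} {A : ℝ → ℂ} (h : Bd 1 (-2) M A) :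
    ∫ y, phs a x y * A y = ∫ y, phs a x y * Lop a x A y := by
  obtain ⟨C, hC, hw⟩ := wgt_Bd (a1 := a) ha (abs_nonneg x) 1
  obtain ⟨C', hC', hL⟩ := Lop_Bd (a1 := a) ha (abs_nonneg x) 0
  have hw := hw a x le_rfl le_rfl le_rfl
  have hL := hL a x le_rfl le_rfl le_rfl _ _ _ h
  have hI1 := h.integrable (a := a) (x := x) (by norm_num)
  have hI2 := hL.integrable (a := a) (x := x) (by norm_num)
  have hB := (Bd_lin 1 1 x).mul (hw.mul h)
  have hI3 := hB.integrable (a := a) (x := x) (by norm_num)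
  have hz := integral_eq_zero_of_hasDerivAt_of_integrable (f := fun y => phs a x y * (1 * ((y : ℂ) - x) * (wgt a x y * A y)))
    (f' := fun y => phs a x y * A y - phs a x y * Lop a x A y) ?_ (hI1.sub hI2) hI3
  · rw [integral_sub hI1 hI2] at hz
    exact sub_eq_zero.1 hz
  · intro y
    have h1 : HasDerivAt (fun y : ℝ => 1 * ((y : ℂ) - x)) 1 y := by
      simpa using (Complex.ofRealCLM.hasDerivAt (x := y)).sub_const (x : ℂ)
    have h2 : HasDerivAt (fun u => wgt a x u * A u) (deriv (fun u => wgt a x u * A u) y) y :=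
      (((hw.mul h).1.differentiable (by simp)) y).hasDerivAt
    have h3 := (phs_deriv a x y).mul (h1.mul h2)
    refine h3.congr_deriv ?_
    simp only [Lop]
    have hD := wgt_ne a x y
    have : (1 + 2 * Complex.I * a * ((y : ℂ) - x) ^ 2) * wgt a x y = 1 := mul_inv_cancel₀ hD
    simp only [Pi.mul_apply]
    linear_combination (phs a x y * A y) * this

lemma ibp_iter {a x : ℝ} (ha : 0 < a) (k : ℕ) : ∀ {M : ℝ} {A : ℝ → ℂ}, Bd k (-2) M A →
    ∫ y, phs a x y * A y = ∫ y, phs a x y * (Lop a x)^[k] A y := by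
  induction k with
  | zero => intro M A _; rfl
  | succ k ih =>
    intro M A h
    obtain ⟨C', hC', hL⟩ := Lop_Bd (a1 := a) ha (abs_nonneg x) k
    have hL := hL a x le_rfl le_rfl le_rfl _ _ _ h
    rw [ibp_s18 ha (h.mono (by omega) le_rfl le_rfl), Function.iterate_succ_apply]
    exact ih (hL.mono le_rfl (by norm_num) le_rfl)

/-- regularised integral -/
def Jop (n : ℕ) (a x : ℝ) (A : ℝ → ℂ) : ℂ := ∫ y, phs a x y * (Lop a x)^[n] A y

lemma Jop_bound {a0 a1 X γ : ℝ} (ha0 : 0 < a0) (hX : 0 ≤ X) (n : ℕ) (hγ : γ < n - 1) :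
    ∃ C, 0 ≤ C ∧ ∀ a x : ℝ, a0 ≤ a → a ≤ a1 → |x| ≤ X → ∀ (M : ℝ) (A : ℝ → ℂ), Bd n γ M A →
      ‖Jop n a x A‖ ≤ C * M := by
  obtain ⟨C, hC, h⟩ := Lop_iter_Bd (a1 := a1) ha0 hX n
  have hI : 0 ≤ ∫ y : ℝ, (1 + |y|) ^ (γ - n) := integral_nonneg fun y => by positivity
  refine ⟨C * ∫ y : ℝ, (1 + |y|) ^ (γ - n), by positivity, fun a x ha ha1 hx M A hA => ?_⟩
  have := (h a x ha ha1 hx _ _ _ hA).norm_integral (a := a) (x := x) (by linarith)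
  calc _ ≤ _ := this
    _ = _ := by ring

lemma Jop_sub {a x γ M M' : ℝ} (ha : 0 < a) (n : ℕ) (hγ : γ < n - 1) {A B : ℝ → ℂ}
    (hA : Bd n γ M A) (hB : Bd n γ M' B) :
    Jop n a x (fun y => A y - B y) = Jop n a x A - Jop n a x B := by
  obtain ⟨C, hC, h⟩ := Lop_iter_Bd (a1 := a) ha (abs_nonneg x) n
  have h := h a x le_rfl le_rfl le_rfl
  have h1 := (h _ _ _ hA).integrable (a := a) (x := x) (by linarith)
  have h2 := (h _ _ _ hB).integrable (a := a) (x := x) (by linarith)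
  rw [Jop, Jop, Jop, ← integral_sub h1 h2, Lop_iter_sub ha n hA.1 hB.1]
  simp only [mul_sub]

/-- gaussian -/
def gau (ε y : ℝ) : ℂ := Complex.exp (-(ε : ℂ) * y ^ 2)

lemma gau_eq (ε y : ℝ) : gau ε y = ((Real.exp (-(ε * y ^ 2)) : ℝ) : ℂ) := by
  rw [gau]; push_cast; congr 1; ring

lemma gau_deriv (ε y : ℝ) : HasDerivAt (gau ε) ((-2 * ε) * ((y : ℂ) - (0 : ℝ)) * gau ε y) y := by
  have h1 : HasDerivAt (fun y : ℝ => (y : ℂ)) 1 y := by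
    simpa using (hasDerivAt_id y).ofReal_comp
  have h2 := ((h1.pow 2).const_mul (-(ε : ℂ))).cexp
  refine h2.congr_deriv ?_
  simp [gau]
  ring

lemma gau_decay {ε : ℝ} (hε : 0 < ε) (s : ℕ) : ∃ C, ∀ y, ‖gau ε y‖ ≤ C * (1 + |y|) ^ (-(s : ℝ)) := by
  refine ⟨s.factorial * Real.exp (1 + 1 / ε), fun y => ?_⟩
  have hr : 0 < 1 + |y| := by positivity
  rw [gau_eq, Complex.norm_real, Real.norm_eq_abs, Real.abs_exp, Real.rpow_neg hr.le,
    Real.rpow_natCast, ← div_eq_mul_inv, le_div_iff₀ (by positivity)]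
  have h1 : (1 + |y|) ^ s ≤ s.factorial * Real.exp (1 + |y|) := by
    have := Real.pow_div_factorial_le_exp (1 + |y|) hr.le s
    rwa [div_le_iff₀' (by positivity)] at this
  have h2 : -(ε * y ^ 2) + (1 + |y|) ≤ 1 + 1 / ε := by
    have : |y| ≤ ε * y ^ 2 + 1 / ε := by
      rw [← sq_abs]
      have e : ε * |y| ^ 2 + 1 / ε - |y| = (ε * |y| - 1 / 2) ^ 2 / ε + 3 / 4 / ε := by
        field_simp; ring
      have : 0 ≤ (ε * |y| - 1 / 2) ^ 2 / ε + 3 / 4 / ε := by positivity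
      linarith
    linarith
  calc _ ≤ Real.exp (-(ε * y ^ 2)) * (s.factorial * Real.exp (1 + |y|)) := by gcongr
    _ = s.factorial * Real.exp (-(ε * y ^ 2) + (1 + |y|)) := by rw [Real.exp_add (-(ε * y ^ 2)) (1 + |y|)]; ring
    _ ≤ _ := by gcongr

lemma gau_Bd {ε : ℝ} (hε : 0 < ε) (k : ℕ) : ∀ s : ℕ, ∃ C, Bd k (-(s : ℝ)) C (gau ε) := by
  induction k with
  | zero =>
    intro s
    obtain ⟨C, hC⟩ := gau_decay hε s
    exact ⟨C, Bd.zero hC (continuous_iff_continuousAt.2 fun y => (gau_deriv ε y).continuousAt)⟩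
  | succ k ih =>
    intro s
    obtain ⟨C, hC⟩ := gau_decay hε s
    obtain ⟨C', hC'⟩ := ih (s + 1)
    have h := (Bd_lin k (-2 * ε) 0).mul hC'
    refine ⟨max C _, Bd.succ (fun y => (hC y).trans ?_) (gau_deriv ε) (h.mono le_rfl ?_ (le_max_right _ _))⟩
    · exact mul_le_mul_of_nonneg_right (le_max_left _ _) (by positivity)
    · push_cast; linarith

lemma gau_unif (k : ℕ) : ∃ C, 0 ≤ C ∧ ∀ ε, 0 < ε → ε ≤ 1 → Bd k 0 C (gau ε) := by
  obtain ⟨C, hC⟩ := gau_Bd one_pos k 0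
  simp only [Nat.cast_zero, neg_zero] at hC
  refine ⟨C, hC.nonneg, fun ε h0 h1 => ?_⟩
  have e : gau ε = fun y => gau 1 (√ε * y) := by
    funext y
    rw [gau_eq, gau_eq, mul_pow, Real.sq_sqrt h0.le, one_mul]
  refine ⟨(gau_Bd h0 k 0).choose_spec.1, fun j hj y => ?_⟩
  rw [e, iteratedDeriv_comp_const_smul (hC.1.of_le (by exact_mod_cast hj))]
  have := hC.2 j hj (√ε * y)
  simp only [Real.rpow_zero, mul_one] at this ⊢
  rw [norm_smul, norm_pow, Real.norm_eq_abs, abs_of_nonneg (Real.sqrt_nonneg _)]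
  have h3 : √ε ^ j ≤ 1 := pow_le_one₀ (Real.sqrt_nonneg _) (Real.sqrt_le_one.2 h1)
  calc _ ≤ 1 * C := mul_le_mul h3 this (norm_nonneg _) zero_le_one
    _ = C := one_mul C

lemma gau_one_sub (k : ℕ) : ∃ C, 0 ≤ C ∧ ∀ ε, 0 < ε → ε ≤ 1 →
    Bd (k + 1) 2 (C * ε) (fun y => 1 - gau ε y) := by
  obtain ⟨C, hC, h⟩ := gau_unif k
  refine ⟨max 1 (2 ^ k * (2 * C)), by positivity, fun ε h0 h1 => ?_⟩
  refine Bd.succ (g := fun y => (2 * ε) * ((y : ℂ) - (0 : ℝ)) * gau ε y) (fun y => ?_) (fun y => ?_) ?_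
  · have : (1 : ℂ) - gau ε y = ((1 - Real.exp (-(ε * y ^ 2)) : ℝ) : ℂ) := by rw [gau_eq]; push_cast; rfl
    rw [this, Complex.norm_real, Real.norm_eq_abs]
    have e1 := Real.add_one_le_exp (-(ε * y ^ 2))
    have e2 : Real.exp (-(ε * y ^ 2)) ≤ 1 := Real.exp_le_one_iff.2 (by nlinarith [sq_nonneg y])
    rw [abs_of_nonneg (by linarith)]
    have e : (1 + |y|) ^ (2 : ℝ) = (1 + |y|) ^ 2 := by norm_cast
    have e3 : y ^ 2 ≤ (1 + |y|) ^ 2 := by nlinarith [abs_nonneg y, sq_abs y]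
    rw [e]
    calc _ ≤ 1 * ε * y ^ 2 := by linarith
      _ ≤ _ := by gcongr; exact le_max_left _ _
  · have := (gau_deriv ε y).const_sub 1
    refine this.congr_deriv ?_
    ring
  · have hh := (Bd_lin k (2 * ε) 0).mul (h ε h0 h1)
    refine hh.mono le_rfl (by norm_num) ?_
    have : ‖(2 * ε : ℂ)‖ = 2 * ε := by simp [abs_of_pos h0]
    rw [this]
    simp only [abs_zero, add_zero, mul_one]
    calc _ = (2 ^ k * (2 * C)) * ε := by ring
      _ ≤ _ := by gcongr; exact le_max_right _ _

lemma main_limit {a x γ M : ℝ} (ha : 0 < a) (n : ℕ) (hγ : γ + 2 < n - 1) {A : ℝ → ℂ}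
    (hA : Bd n γ M A) :
    Tendsto (fun ε : ℝ => ∫ y : ℝ, phs a x y * (gau ε y * A y)) (𝓝[>] 0) (𝓝 (Jop n a x A)) := by
  obtain ⟨C, hC, h⟩ := Jop_bound (a1 := a) ha (abs_nonneg x) n hγ
  obtain ⟨C', hC', h'⟩ := gau_one_sub n
  have hM := hA.nonneg
  have key : ∀ᶠ ε : ℝ in 𝓝[>] 0, ‖(∫ y : ℝ, phs a x y * (gau ε y * A y)) - Jop n a x A‖
      ≤ (C * (2 ^ n * (C' * M))) * ε := by
    filter_upwards [Ioo_mem_nhdsGT (show (0 : ℝ) < 1 by norm_num)] with ε hε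
    obtain ⟨D, hD⟩ := gau_Bd hε.1 n (Nat.ceil (γ + 2) )
    have e1 : Bd n (-2) _ (fun y => gau ε y * A y) := (hD.mul hA).mono le_rfl (by
      have := Nat.le_ceil (γ + 2)
      linarith) le_rfl
    have e2 := ibp_iter (x := x) ha n e1
    rw [e2]
    change ‖Jop n a x _ - _‖ ≤ _
    obtain ⟨E, hE, hE'⟩ := gau_unif n
    have e3 : Bd n (γ + 2) _ (fun y => gau ε y * A y) :=
      ((hE' ε hε.1 hε.2.le).mul hA).mono le_rfl (by linarith) le_rfl
    have e4 : Bd n (γ + 2) _ A := hA.mono le_rfl (by linarith) le_rfl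
    rw [norm_sub_rev, ← Jop_sub ha n hγ e4 e3]
    have e5 := (((h' ε hε.1 hε.2.le).mono (Nat.le_succ n) le_rfl le_rfl).mul hA)
    have e6 := h a x le_rfl le_rfl le_rfl _ (fun y => A y - gau ε y * A y) (by
      have : (fun y => A y - gau ε y * A y) = fun y => (1 - gau ε y) * A y := by
        funext y; ring
      rw [this, add_comm]
      exact e5)
    refine e6.trans (le_of_eq ?_)
    ring
  rw [tendsto_iff_norm_sub_tendsto_zero]
  refine squeeze_zero' (Eventually.of_forall fun _ => norm_nonneg _) key ?_
  have : Tendsto (fun ε : ℝ => (C * (2 ^ n * (C' * M))) * ε) (𝓝 0) (𝓝 ((C * (2 ^ n * (C' * M))) * 0)) :=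
    tendsto_id.const_mul _
  rw [mul_zero] at this
  exact this.mono_left nhdsWithin_le_nhds

lemma AC_local {S : Set ℝ} (hS : IsOpen S) (hc : S.OrdConnected) {a : ℝ → ℝ} (h : IsACOn S a)
    {t : ℝ} (ht : t ∈ S) : ContinuousAt a t := by
  obtain ⟨g, hg, he⟩ := h
  obtain ⟨δ, hδ, hb⟩ := Metric.isOpen_iff.1 hS t ht
  have hl : t - δ / 2 ∈ S := hb (by simp [abs_of_pos hδ]; linarith)
  have hu : t + δ / 2 ∈ S := hb (by simp [abs_of_pos hδ]; linarith)
  have hsub : Icc (t - δ / 2) (t + δ / 2) ⊆ S := hc.out hl hu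
  have hle : t - δ / 2 ≤ t + δ / 2 := by linarith
  have hI : IntegrableOn g (uIcc (t - δ / 2) (t + δ / 2)) := by
    rw [uIcc_of_le hle]
    exact hg.integrableOn_compact_subset hsub isCompact_Icc
  have hcont := intervalIntegral.continuousOn_primitive_interval hI
  rw [uIcc_of_le hle] at hcont
  have hn : Icc (t - δ / 2) (t + δ / 2) ∈ 𝓝 t := Icc_mem_nhds (by linarith) (by linarith)
  have hc2 := (hcont.continuousAt hn).const_add (a (t - δ / 2))
  refine hc2.congr ?_
  filter_upwards [hn] with s hs
  rcases hs.1.eq_or_lt with h1 | h1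
  · rw [← h1]; simp
  · rw [← he _ hl _ (hsub hs) h1]; ring

/-- continuous dependence of the solution on the initial condition: if
`F_m → F` in `C^n(ℝ,r^β)` then `Ψ(t,x;F_m) → Ψ(t,x;F)` locally uniformly on `(0,T)×ℝ`. -/
theorem stmt18 (T : ℝ≥0∞) (hT : 0 < T) (S : Set ℝ)
    (hS : S = {t : ℝ | 0 < t ∧ ENNReal.ofReal t < T})
    (V : ℝ → ℝ → ℂ) (hV : Measurable fun p : ℝ × ℝ => V p.1 p.2)
    (G : ℝ → ℝ → ℝ → ℂ)
    (hGAC : ∀ y : ℝ, MemAC12 S (fun t x => G t x y))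
    (hGeq : ∀ y : ℝ, ∀ᵐ t ∂(volume : Measure ℝ), t ∈ S → ∀ x : ℝ,
      Complex.I * deriv (fun τ => G τ x y) t =
        -(deriv (deriv (fun ξ => G t ξ y)) x) + V t x * G t x y)
    (hGinit : ∀ x₀ : ℝ, 0 < x₀ → ∀ φ : ℝ → ℂ, ContDiffOn ℝ 1 φ (Set.Icc (-x₀) x₀) →
      ∀ x ∈ Set.Ioo (-x₀) x₀,
        Tendsto (fun t => ∫ y in (-x₀)..x₀, G t x y * φ y) (𝓝[S] 0) (𝓝 (φ x)))
    (a : ℝ → ℝ) (haAC : IsACOn S a) (hapos : ∀ t ∈ S, 0 < a t)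
    (hainf : Tendsto a (𝓝[S] 0) atTop)
    (Gt : ℝ → ℝ → ℝ → ℂ)
    (hdecomp : ∀ t ∈ S, ∀ x y : ℝ,
      G t x y = Complex.exp (Complex.I * a t * ((y : ℂ) - x) ^ 2) * Gt t x y)
    (n : ℕ) (α : ℝ) (hα : 0 ≤ α) (hn : α + 3 < n)
    (hreg : ∀ t ∈ S, ∀ x : ℝ,
      MemCnR n α (fun y => Gt t x y) ∧
      MemCnR n (α + 1) (fun y => deriv (fun ξ => Gt t ξ y) x) ∧
      MemCnR n (α + 2) (fun y => deriv (deriv (fun ξ => Gt t ξ y)) x) ∧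
      MemCnR n (α + 2) (fun y => deriv (fun τ => Gt τ x y) t))
    (hbdd : ∀ t ∈ S, ∀ x : ℝ, ∃ M : ℝ, ∀ᶠ p in 𝓝[S ×ˢ (Set.univ : Set ℝ)] (t, x),
      CnRNorm n α (fun y => Gt p.1 p.2 y) ≤ M ∧
      CnRNorm n (α + 1) (fun y => deriv (fun ξ => Gt p.1 ξ y) p.2) ≤ M ∧
      CnRNorm n (α + 2) (fun y => deriv (deriv (fun ξ => Gt p.1 ξ y)) p.2) ≤ M ∧
      CnRNorm n (α + 2) (fun y => deriv (fun τ => Gt τ p.2 y) p.1) ≤ M)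
    (hinit0 : ∀ x : ℝ,
      Tendsto (fun t => CnRNorm n α (fun y => Gt t x y) / a t) (𝓝[S] 0) (𝓝 0))
    (β : ℝ) (hβ0 : 0 ≤ β) (hβ : β < (n : ℝ) - α - 3)
    (F : ℝ → ℂ) (hF : MemCnR n β F) (Fm : ℕ → ℝ → ℂ) (hFm : ∀ m, MemCnR n β (Fm m))
    (hconv : Tendsto (fun m => CnRNorm n β (fun y => F y - Fm m y)) atTop (𝓝 0)) :
    ∃ (Ψ : ℝ → ℝ → ℂ) (Ψm : ℕ → ℝ → ℝ → ℂ),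
      (∀ t ∈ S, ∀ x : ℝ,
        Tendsto (fun ε : ℝ => ∫ y : ℝ, Complex.exp (-(ε : ℂ) * y ^ 2) * G t x y * F y)
          (𝓝[>] 0) (𝓝 (Ψ t x))) ∧
      (∀ m, ∀ t ∈ S, ∀ x : ℝ,
        Tendsto (fun ε : ℝ => ∫ y : ℝ, Complex.exp (-(ε : ℂ) * y ^ 2) * G t x y * Fm m y)
          (𝓝[>] 0) (𝓝 (Ψm m t x))) ∧
      TendstoLocallyUniformlyOn (fun m (p : ℝ × ℝ) => Ψm m p.1 p.2) (fun p => Ψ p.1 p.2)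
        atTop (S ×ˢ (Set.univ : Set ℝ)) := by
  have hSo : IsOpen S := by
    rw [hS]
    exact isOpen_Ioi.inter (isOpen_Iio.preimage ENNReal.continuous_ofReal)
  have hSc : S.OrdConnected := by
    rw [hS]
    refine ⟨fun u hu v hv w hw => ⟨lt_of_lt_of_le hu.1 hw.1, ?_⟩⟩
    exact lt_of_le_of_lt (ENNReal.ofReal_le_ofReal hw.2) hv.2
  have hG : ∀ t ∈ S, ∀ x, Bd n α (CnRNorm n α (fun y => Gt t x y)) (fun y => Gt t x y) :=
    fun t ht x => Bd_of_Mem (hreg t ht x).1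
  have hlim : ∀ H : ℝ → ℂ, MemCnR n β H → ∀ t ∈ S, ∀ x : ℝ,
      Tendsto (fun ε : ℝ => ∫ y : ℝ, Complex.exp (-(ε : ℂ) * y ^ 2) * G t x y * H y)
          (𝓝[>] 0) (𝓝 (Jop n (a t) x (fun y => Gt t x y * H y))) := by
    intro H hH t ht x
    have := main_limit (x := x) (hapos t ht) n (by linarith) ((hG t ht x).mul (Bd_of_Mem hH))
    refine this.congr fun ε => ?_
    congr 1
    funext y
    rw [hdecomp t ht x y]
    simp only [phs, gau]
    ring
  refine ⟨fun t x => Jop n (a t) x (fun y => Gt t x y * F y),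
    fun m t x => Jop n (a t) x (fun y => Gt t x y * Fm m y), hlim F hF,
    fun m => hlim (Fm m) (hFm m), ?_⟩
  rw [Metric.tendstoLocallyUniformlyOn_iff]
  rintro η hη ⟨t0, x0⟩ ⟨ht0, -⟩
  obtain ⟨M, hM⟩ := hbdd t0 ht0 x0
  have hc := AC_local hSo hSc haAC ht0
  have hp := hapos t0 ht0
  have e1 : ∀ᶠ s in 𝓝 t0, a s ∈ Icc (a t0 / 2) (a t0 + 1) :=
    hc (Icc_mem_nhds (by linarith) (by linarith))
  have e1' : ∀ᶠ p : ℝ × ℝ in 𝓝[S ×ˢ (Set.univ : Set ℝ)] (t0, x0),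
      a p.1 ∈ Icc (a t0 / 2) (a t0 + 1) :=
    ((continuous_fst.tendsto (t0, x0)).eventually e1).filter_mono nhdsWithin_le_nhds
  have e2 : ∀ᶠ p : ℝ × ℝ in 𝓝[S ×ˢ (Set.univ : Set ℝ)] (t0, x0), |p.2| < |x0| + 1 :=
    Filter.Eventually.filter_mono nhdsWithin_le_nhds
      ((continuous_snd.abs.tendsto (t0, x0)).eventually (eventually_lt_nhds (by simp)))
  obtain ⟨C, hC, hJ⟩ := Jop_bound (a0 := a t0 / 2) (a1 := a t0 + 1) (X := |x0| + 1)
    (γ := α + β) (by linarith) (by positivity) n (by linarith)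
  have hlim0 : Tendsto (fun m => C * (2 ^ n * (|M| * CnRNorm n β (fun y => F y - Fm m y)))) atTop
      (𝓝 (C * (2 ^ n * (|M| * 0)))) :=
    ((hconv.const_mul _).const_mul _).const_mul _
  simp only [mul_zero] at hlim0
  refine ⟨_, (hM.and (e1'.and (e2.and self_mem_nhdsWithin))), ?_⟩
  filter_upwards [hlim0.eventually (eventually_lt_nhds hη)] with m hm
  rintro ⟨t, x⟩ ⟨⟨hMp, -⟩, ha', hx, ht, -⟩
  simp only at hMp ha' hx ht ⊢
  have hB1 := (hG t ht x).mul (Bd_of_Mem hF)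
  have hB2 := (hG t ht x).mul (Bd_of_Mem (hFm m))
  rw [dist_eq_norm, ← Jop_sub (hapos t ht) n (by linarith) hB1 hB2]
  have hmem : MemCnR n β (fun y => F y - Fm m y) := by
    have h := (Bd_of_Mem hF).sub (Bd_of_Mem (hFm m))
    exact ⟨h.1, _, h.nonneg, h.2⟩
  have hB3 := ((hG t ht x).mono le_rfl le_rfl (hMp.trans (le_abs_self M))).mul (Bd_of_Mem hmem)
  have e : (fun y => Gt t x y * F y - Gt t x y * Fm m y) = fun y => Gt t x y * (F y - Fm m y) := by
    funext y; ring
  rw [e]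
  exact (hJ (a t) x ha'.1 ha'.2 hx.le _ _ hB3).trans_lt hm
end
end

section
/- Let n≥4 be an integer and 0≤β<n−3, and let F∈C^n(ℝ,r^β). Then for every t∈(0,∞) and x∈ℝ the limit Ψ(t,x) := (1/(2√(iπt))) · lim_{ε→0⁺} ∫_ℝ e^{−εy²} e^{i(y−x)²/(4t)} F(y) dy exists (where √(iπt) denotes the principal square root), the function Ψ belongs to AC_{1,2}((0,∞)×ℝ), it satisfies the free Schrödinger equation i·∂Ψ/∂t(t,x) = −∂²Ψ/∂x²(t,x) for a.e. t∈(0,∞) and all x∈ℝ, and lim_{t→0⁺} Ψ(t,x) = F(x) for every x∈ℝ. -/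
open Set Filter MeasureTheory Topology

noncomputable section

namespace FreeP

/-- the phase -/
def E (w : ℝ) : ℂ := Complex.exp (Complex.I * (w : ℂ) ^ 2 / 4)

def den (w : ℝ) : ℂ := 1 + Complex.I * (w : ℂ) ^ 2 / 2
def p (w : ℝ) : ℂ := (den w)⁻¹
def q (w : ℝ) : ℂ := (w : ℂ) * p w

lemma norm_E (w : ℝ) : ‖E w‖ = 1 := by
  have : E w = Complex.exp (((w ^ 2 / 4 : ℝ) : ℂ) * Complex.I) := by
    unfold E; congr 1; push_cast; ring
  rw [this, Complex.norm_exp_ofReal_mul_I]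

lemma cont_E : Continuous E := by unfold E; fun_prop

lemma hasDerivAt_ofReal (w : ℝ) : HasDerivAt (fun w : ℝ => (w : ℂ)) 1 w :=
  (hasDerivAt_id w).ofReal_comp

lemma hasDerivAt_E (w : ℝ) : HasDerivAt E (Complex.I * w / 2 * E w) w := by
  have h := ((((hasDerivAt_ofReal w).pow 2).const_mul Complex.I).div_const 4).cexp
  refine h.congr_deriv ?_
  unfold E; simp; ring

lemma normSq_den (w : ℝ) : ‖den w‖ ^ 2 = 1 + w ^ 4 / 4 := by
  have : den w = ⟨1, w ^ 2 / 2⟩ := by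
    unfold den
    apply Complex.ext <;> simp [← Complex.ofReal_pow]
  rw [this, Complex.sq_norm, Complex.normSq_mk]; ring

lemma den_ne (w : ℝ) : den w ≠ 0 := by
  intro h
  have := normSq_den w
  rw [h] at this; simp at this
  nlinarith [sq_nonneg (w ^ 2)]

lemma hasDerivAt_den (w : ℝ) : HasDerivAt den (Complex.I * w) w := by
  have h := ((((hasDerivAt_ofReal w).pow 2).const_mul Complex.I).div_const 2).const_add 1
  refine h.congr_deriv ?_
  simp
  ring

lemma hasDerivAt_p (w : ℝ) : HasDerivAt p (-Complex.I * (q w * p w)) w := by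
  have h := (hasDerivAt_den w).inv (den_ne w)
  refine h.congr_deriv ?_
  unfold q p
  field_simp [den_ne w]

lemma hasDerivAt_q (w : ℝ) : HasDerivAt q (2 * (p w * p w) - p w) w := by
  have h := (hasDerivAt_ofReal w).mul (hasDerivAt_p w)
  refine h.congr_deriv ?_
  unfold q p
  have h1 := den_ne w
  field_simp
  unfold den
  ring

lemma E_q (w : ℝ) : Complex.I * w / 2 * q w = 1 - p w := by
  unfold q p
  have h1 := den_ne w
  field_simp
  unfold den
  ring

lemma le_of_sq_le_sq' {a b : ℝ} (h : a ^ 2 ≤ b ^ 2) (hb : 0 ≤ b) : a ≤ b :=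
  (le_abs_self a).trans (abs_le_of_sq_le_sq h hb)

lemma bd_p (w : ℝ) : ‖p w‖ * (1 + |w|) ≤ 4 := by
  have h0 : 0 < ‖den w‖ := norm_pos_iff.2 (den_ne w)
  unfold p
  rw [norm_inv, inv_mul_le_iff₀ h0]
  have h := normSq_den w
  refine le_of_sq_le_sq' ?_ (by positivity)
  nlinarith [sq_nonneg (w ^ 2 - 1), sq_abs w, sq_nonneg (|w| - 1)]

lemma bd_q (w : ℝ) : ‖q w‖ * (1 + |w|) ≤ 4 := by
  have h0 : 0 < ‖den w‖ := norm_pos_iff.2 (den_ne w)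
  unfold q p
  rw [norm_mul, norm_inv, Complex.norm_real, Real.norm_eq_abs,
    mul_comm |w|, mul_assoc, inv_mul_le_iff₀ h0]
  have h := normSq_den w
  refine le_of_sq_le_sq' ?_ (by positivity)
  have h3 : |w| * (1 + |w|) ≤ 1 / 2 + 3 / 2 * w ^ 2 := by
    nlinarith [sq_abs w, sq_nonneg (|w| - 1)]
  have h4 : (|w| * (1 + |w|)) ^ 2 ≤ (1 / 2 + 3 / 2 * w ^ 2) ^ 2 := by gcongr
  nlinarith [sq_nonneg (w ^ 2), sq_nonneg (w ^ 2 - 1), sq_nonneg w]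

inductive Sym : ℕ → (ℝ → ℂ) → Prop
  | const (c : ℂ) : Sym 0 (fun _ => c)
  | zero (k : ℕ) : Sym k (fun _ => 0)
  | add {k : ℕ} {a b : ℝ → ℂ} : Sym k a → Sym k b → Sym k (fun w => a w + b w)
  | smul {k : ℕ} {a : ℝ → ℂ} (c : ℂ) : Sym k a → Sym k (fun w => c * a w)
  | mulp {k : ℕ} {a : ℝ → ℂ} : Sym k a → Sym (k + 1) (fun w => p w * a w)
  | mulq {k : ℕ} {a : ℝ → ℂ} : Sym k a → Sym (k + 1) (fun w => q w * a w)
  | weak {k : ℕ} {a : ℝ → ℂ} : Sym (k + 1) a → Sym k a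

lemma Sym.bd {k : ℕ} {a : ℝ → ℂ} (h : Sym k a) :
    ∃ C : ℝ, 0 ≤ C ∧ ∀ w, ‖a w‖ * (1 + |w|) ^ k ≤ C := by
  induction h with
  | const c => exact ⟨‖c‖, norm_nonneg _, by simp⟩
  | zero k => exact ⟨0, le_rfl, by simp⟩
  | @add k a b _ _ ih1 ih2 =>
    obtain ⟨C, hC, h1⟩ := ih1
    obtain ⟨D, hD, h2⟩ := ih2
    refine ⟨C + D, by positivity, fun w => ?_⟩
    calc _ ≤ (‖a w‖ + ‖b w‖) * (1 + |w|) ^ k := by gcongr; exact norm_add_le _ _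
      _ ≤ _ := by rw [add_mul]; exact add_le_add (h1 w) (h2 w)
  | smul c _ ih =>
    obtain ⟨C, hC, h1⟩ := ih
    refine ⟨‖c‖ * C, by positivity, fun w => ?_⟩
    rw [norm_mul, mul_assoc]
    gcongr; exact h1 w
  | mulp _ ih =>
    obtain ⟨C, hC, h1⟩ := ih
    refine ⟨4 * C, by positivity, fun w => ?_⟩
    rw [norm_mul, pow_succ', mul_mul_mul_comm]
    exact mul_le_mul (bd_p w) (h1 w) (by positivity) (by norm_num)
  | mulq _ ih =>
    obtain ⟨C, hC, h1⟩ := ih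
    refine ⟨4 * C, by positivity, fun w => ?_⟩
    rw [norm_mul, pow_succ', mul_mul_mul_comm]
    exact mul_le_mul (bd_q w) (h1 w) (by positivity) (by norm_num)
  | weak _ ih =>
    obtain ⟨C, hC, h1⟩ := ih
    refine ⟨C, hC, fun w => le_trans ?_ (h1 w)⟩
    gcongr
    · linarith [abs_nonneg w]
    · omega

lemma Sym.der {k : ℕ} {a : ℝ → ℂ} (h : Sym k a) :
    ∃ a' : ℝ → ℂ, Sym k a' ∧ ∀ w, HasDerivAt a (a' w) w := by
  induction h with
  | const c => exact ⟨_, .zero 0, fun w => hasDerivAt_const _ _⟩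
  | zero k => exact ⟨_, .zero k, fun w => hasDerivAt_const _ _⟩
  | add _ _ ih1 ih2 =>
    obtain ⟨a', h1, h1'⟩ := ih1
    obtain ⟨b', h2, h2'⟩ := ih2
    exact ⟨_, h1.add h2, fun w => (h1' w).add (h2' w)⟩
  | smul c _ ih =>
    obtain ⟨a', h1, h1'⟩ := ih
    exact ⟨_, h1.smul c, fun w => (h1' w).const_mul c⟩
  | mulp h ih =>
    obtain ⟨a', h1, h1'⟩ := ih
    refine ⟨_, ((h.mulp.mulq.smul (-Complex.I)).weak).add h1.mulp, fun w => ?_⟩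
    refine ((hasDerivAt_p w).mul (h1' w)).congr_deriv ?_
    ring
  | mulq h ih =>
    obtain ⟨a', h1, h1'⟩ := ih
    refine ⟨_, ((h.mulp.mulp.smul 2).weak.add (h.mulp.smul (-1))).add h1.mulq, fun w => ?_⟩
    refine ((hasDerivAt_q w).mul (h1' w)).congr_deriv ?_
    ring
  | weak _ ih =>
    obtain ⟨a', h1, h1'⟩ := ih
    exact ⟨a', h1.weak, h1'⟩

lemma Sym.cont {k : ℕ} {a : ℝ → ℂ} (h : Sym k a) : Continuous a := by
  obtain ⟨a', _, h'⟩ := h.der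
  exact continuous_iff_continuousAt.2 fun w => (h' w).continuousAt

lemma Sym.sub {k : ℕ} {a b : ℝ → ℂ} (h : Sym k a) (h2 : Sym k b) :
    Sym k (fun w => a w - b w) := by
  have := h.add (h2.smul (-1))
  convert this using 2
  ring

lemma Sym.integrable {k : ℕ} {a g : ℝ → ℂ} (h : Sym k a) (hg : Integrable g) :
    Integrable (fun w => E w * a w * g w) := by
  obtain ⟨C, hC, hb⟩ := h.bd
  refine hg.bdd_mul (c := C) ((cont_E.mul h.cont).aestronglyMeasurable) ?_
  refine Filter.Eventually.of_forall fun w => ?_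
  rw [norm_mul, norm_E, one_mul]
  refine le_trans ?_ (hb w)
  refine le_mul_of_one_le_right (norm_nonneg _) (one_le_pow₀ ?_)
  linarith [abs_nonneg w]

/-- one integration by parts -/
lemma Sym.ibp {k : ℕ} {a : ℝ → ℂ} (h : Sym k a) :
    ∃ b : ℝ → ℂ, Sym (k + 1) b ∧ ∀ g g' : ℝ → ℂ, (∀ w, HasDerivAt g (g' w) w) →
      Integrable g → Integrable g' →
      ∫ w, E w * a w * g w = (∫ w, E w * b w * g w) - ∫ w, E w * (q w * a w) * g' w := by
  obtain ⟨d, hd, hd'⟩ := h.mulq.der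
  refine ⟨_, h.mulp.sub hd, fun g g' hg hi hi' => ?_⟩
  have I1 := h.integrable hi
  have I2 := (h.mulp.sub hd).integrable hi
  have I3 := h.mulq.integrable hi'
  have key := integral_eq_zero_of_hasDerivAt_of_integrable
    (f := fun w => E w * (q w * a w) * g w)
    (f' := fun w => E w * a w * g w - E w * (p w * a w - d w) * g w
      + E w * (q w * a w) * g' w) (fun w => ?_)
    ((I1.sub I2).add I3) (h.mulq.integrable hi)
  · have I12 : Integrable (fun w => E w * a w * g w - E w * (p w * a w - d w) * g w) := I1.sub I2
    rw [integral_add I12 I3, integral_sub I1 I2] at key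
    linear_combination key
  · refine (((hasDerivAt_E w).mul (hd' w)).mul (hg w)).congr_deriv ?_
    simp only [Pi.mul_apply]
    linear_combination (E w * a w * g w) * E_q w

/-- universal coefficients -/
def Coeff (m : ℕ) (a : ℕ → ℝ → ℂ) : Prop :=
  (∀ j, Sym m (a j)) ∧ ∀ g : ℝ → ℂ, ContDiff ℝ m g →
    (∀ j ≤ m, Integrable (iteratedDeriv j g)) →
    ∫ w, E w * g w = ∑ j ∈ Finset.range (m + 1), ∫ w, E w * a j w * iteratedDeriv j g w

lemma hasDerivAt_iteratedDeriv {m : ℕ} {g : ℝ → ℂ} (hg : ContDiff ℝ m g) {j : ℕ} (hj : j < m)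
    (w : ℝ) : HasDerivAt (iteratedDeriv j g) (iteratedDeriv (j + 1) g w) w := by
  rw [iteratedDeriv_succ]
  exact ((hg.differentiable_iteratedDeriv j (by exact_mod_cast hj)) w).hasDerivAt

lemma exists_coeff (m : ℕ) : ∃ a, Coeff m a := by
  induction m with
  | zero =>
    refine ⟨fun _ _ => 1, fun _ => .const 1, fun g _ _ => by simp⟩
  | succ m ih =>
    obtain ⟨a, ha, h⟩ := ih
    choose b hb hb' using fun j => (ha j).ibp
    refine ⟨fun j w => (if j ≤ m then b j w else 0) - (if 1 ≤ j then q w * a (j - 1) w else 0),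
      fun j => Sym.sub (a := fun w => (if j ≤ m then b j w else 0))
        (b := fun w => (if 1 ≤ j then q w * a (j - 1) w else 0)) ?_ ?_, fun g hg hi => ?_⟩
    · split_ifs
      · exact hb j
      · exact .zero _
    · split_ifs
      · exact (ha _).mulq
      · exact .zero _
    · rw [h g (hg.of_le (by exact_mod_cast Nat.le_succ m)) fun j hj => hi j (by omega)]
      have e1 : ∀ j ∈ Finset.range (m + 1), ∫ w, E w * a j w * iteratedDeriv j g w
          = (∫ w, E w * b j w * iteratedDeriv j g w)
            - ∫ w, E w * (q w * a j w) * iteratedDeriv (j + 1) g w := by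
        intro j hj
        have hj := Finset.mem_range.1 hj
        exact hb' j _ _ (fun w => hasDerivAt_iteratedDeriv hg (by omega) w) (hi _ (by omega))
          (hi _ (by omega))
      rw [Finset.sum_congr rfl e1, Finset.sum_sub_distrib]
      have e2 : ∀ j ∈ Finset.range (m + 1 + 1), ∫ w, E w * ((if j ≤ m then b j w else 0)
            - (if 1 ≤ j then q w * a (j - 1) w else 0)) * iteratedDeriv j g w
          = (∫ w, E w * (if j ≤ m then b j w else 0) * iteratedDeriv j g w)
            - ∫ w, E w * (if 1 ≤ j then q w * a (j - 1) w else 0) * iteratedDeriv j g w := by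
        intro j hj
        have hj := Finset.mem_range.1 hj
        rw [← integral_sub]
        · congr 1; ext w; ring
        · split_ifs
          · exact (hb j).integrable (hi _ (by omega))
          · simp
        · split_ifs
          · exact (ha _).mulq.integrable (hi _ (by omega))
          · simp
      rw [Finset.sum_congr rfl e2, Finset.sum_sub_distrib]
      congr 1
      · rw [Finset.sum_range_succ _ (m + 1)]
        simp only [show ¬ (m + 1 ≤ m) by omega, if_false, mul_zero, zero_mul, integral_zero,
          add_zero]
        refine Finset.sum_congr rfl fun j hj => ?_
        have hj := Finset.mem_range.1 hj
        simp only [show j ≤ m by omega, if_true]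
      · rw [Finset.sum_range_succ' _ (m + 1)]
        simp


def KI (m : ℕ) (a : ℕ → ℝ → ℂ) (u : ℕ → ℝ → ℂ) (s x w : ℝ) : ℂ :=
  ∑ j ∈ Finset.range (m + 1), E w * a j w * ((s : ℂ) ^ j * u j (x + s * w))

def KK (m : ℕ) (a : ℕ → ℝ → ℂ) (u : ℕ → ℝ → ℂ) (s x : ℝ) : ℂ := ∫ w, KI m a u s x w

/-- size condition -/
def UB (m : ℕ) (β M : ℝ) (u : ℕ → ℝ → ℂ) : Prop :=
  ∀ j ≤ m, Continuous (u j) ∧ ∀ y, ‖u j y‖ ≤ M * (1 + |y|) ^ β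

lemma KI_cont {m : ℕ} {a : ℕ → ℝ → ℂ} (ha : ∀ j, Sym m (a j)) {β M : ℝ} {u : ℕ → ℝ → ℂ}
    (hu : UB m β M u) (s x : ℝ) : Continuous (KI m a u s x) := by
  unfold KI
  refine continuous_finsetSum _ fun j hj => ?_
  have h1 := (hu j (by have := Finset.mem_range.1 hj; omega)).1
  have h2 := (ha j).cont
  have h3 := cont_E
  fun_prop

lemma exists_bound {m : ℕ} {a : ℕ → ℝ → ℂ} (ha : ∀ j, Sym m (a j)) {β : ℝ} (hβ0 : 0 ≤ β)
    (hβ : β + 1 < m) {M : ℝ} (hM : 0 ≤ M) (X S : ℝ) :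
    ∃ bound : ℝ → ℝ, Integrable bound ∧ ∀ u, UB m β M u → ∀ x s : ℝ, |x| ≤ X → |s| ≤ S →
      ∀ w, ‖KI m a u s x w‖ ≤ bound w := by
  choose C hC hb using fun j => (ha j).bd
  refine ⟨fun w => (∑ j ∈ Finset.range (m + 1), C j * (S ^ j * (M * (1 + X + S) ^ β))) *
    (1 + ‖w‖) ^ (-((m : ℝ) - β)), ?_, ?_⟩
  · apply Integrable.const_mul
    apply integrable_one_add_norm
    simp; linarith
  intro u hu x s hx hs w
  have hw : 0 ≤ |w| := abs_nonneg w
  have hx0 : 0 ≤ X := (abs_nonneg x).trans hx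
  have hs0 : 0 ≤ S := (abs_nonneg s).trans hs
  unfold KI
  beta_reduce
  rw [Finset.sum_mul]
  refine (norm_sum_le _ _).trans (Finset.sum_le_sum fun j hj => ?_)
  have hu' := (hu j (by have := Finset.mem_range.1 hj; omega)).2 (x + s * w)
  rw [norm_mul, norm_mul, norm_E, one_mul, norm_mul, norm_pow, Complex.norm_real]
  have h1 : ‖a j w‖ ≤ C j * ((1 + |w|) ^ m)⁻¹ := by
    rw [← div_eq_mul_inv, le_div_iff₀ (by positivity)]; exact hb j w
  have h2 : 1 + |x + s * w| ≤ (1 + X + S) * (1 + |w|) := by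
    have := abs_add_le x (s * w)
    rw [abs_mul] at this
    nlinarith [mul_le_mul_of_nonneg_right hs hw]
  have h3 : (1 + |x + s * w|) ^ β ≤ (1 + X + S) ^ β * (1 + |w|) ^ β := by
    rw [← Real.mul_rpow (by positivity) (by positivity)]
    exact Real.rpow_le_rpow (by positivity) h2 hβ0
  have h4 : (1 + ‖w‖) ^ (-((m : ℝ) - β)) = ((1 + |w|) ^ m)⁻¹ * (1 + |w|) ^ β := by
    rw [neg_sub, Real.rpow_sub (by rw [Real.norm_eq_abs]; positivity), Real.rpow_natCast,
      Real.norm_eq_abs]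
    field_simp
  rw [h4]
  calc _ ≤ (C j * ((1 + |w|) ^ m)⁻¹) * (S ^ j * (M * ((1 + X + S) ^ β * (1 + |w|) ^ β))) := by
        have := hC j
        gcongr
        · exact hs
        · exact hu'.trans (by gcongr)
    _ = _ := by ring

lemma KI_integrable {m : ℕ} {a : ℕ → ℝ → ℂ} (ha : ∀ j, Sym m (a j)) {β : ℝ} (hβ0 : 0 ≤ β)
    (hβ : β + 1 < m) {M : ℝ} (hM : 0 ≤ M) {u : ℕ → ℝ → ℂ} (hu : UB m β M u) (s x : ℝ) :
    Integrable (KI m a u s x) := by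
  obtain ⟨b, hb, h⟩ := exists_bound ha hβ0 hβ hM |x| |s|
  exact hb.mono' (KI_cont ha hu s x).aestronglyMeasurable
    (Eventually.of_forall (h u hu x s le_rfl le_rfl))

lemma KK_tendsto {m : ℕ} {a : ℕ → ℝ → ℂ} (ha : ∀ j, Sym m (a j)) {β : ℝ} (hβ0 : 0 ≤ β)
    (hβ : β + 1 < m) {M : ℝ} (hM : 0 ≤ M) {ι : Type*} {l : Filter ι} [l.IsCountablyGenerated]
    {u : ι → ℕ → ℝ → ℂ} {s x : ι → ℝ} {u0 : ℕ → ℝ → ℂ} {s0 x0 : ℝ}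
    (hu : ∀ᶠ i in l, UB m β M (u i)) (hs : Tendsto s l (𝓝 s0)) (hx : Tendsto x l (𝓝 x0))
    (hl : ∀ j ≤ m, ∀ w, Tendsto (fun i => u i j (x i + s i * w)) l (𝓝 (u0 j (x0 + s0 * w)))) :
    Tendsto (fun i => KK m a (u i) (s i) (x i)) l (𝓝 (KK m a u0 s0 x0)) := by
  obtain ⟨b, hb, h⟩ := exists_bound ha hβ0 hβ hM (|x0| + 1) (|s0| + 1)
  have ex : ∀ᶠ i in l, |x i| ≤ |x0| + 1 :=
    (hx.abs.eventually (eventually_le_nhds (by linarith)))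
  have es : ∀ᶠ i in l, |s i| ≤ |s0| + 1 :=
    (hs.abs.eventually (eventually_le_nhds (by linarith)))
  unfold KK
  refine tendsto_integral_filter_of_dominated_convergence b ?_ ?_ hb ?_
  · filter_upwards [hu] with i hi using (KI_cont ha hi _ _).aestronglyMeasurable
  · filter_upwards [hu, ex, es] with i hi h1 h2
    exact Eventually.of_forall (h _ hi _ _ h1 h2)
  · refine Eventually.of_forall fun w => ?_
    unfold KI
    refine tendsto_finsetSum _ fun j hj => ?_
    have hj := Finset.mem_range.1 hj
    refine Tendsto.const_mul _ (Tendsto.mul ?_ (hl j (by omega) w))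
    exact ((Complex.continuous_ofReal.tendsto s0).comp hs).pow j

lemma KK_cont {m : ℕ} {a : ℕ → ℝ → ℂ} (ha : ∀ j, Sym m (a j)) {β : ℝ} (hβ0 : 0 ≤ β)
    (hβ : β + 1 < m) {M : ℝ} (hM : 0 ≤ M) {u : ℕ → ℝ → ℂ} (hu : UB m β M u) :
    Continuous (fun z : ℝ × ℝ => KK m a u z.1 z.2) := by
  refine continuous_iff_continuousAt.2 fun z => ?_
  refine KK_tendsto (u := fun _ => u) ha hβ0 hβ hM (Eventually.of_forall fun _ => hu)
    (continuous_fst.tendsto z) (continuous_snd.tendsto z) fun j hj w => ?_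
  have := (hu j hj).1
  exact Continuous.tendsto (by fun_prop :
    Continuous fun z : ℝ × ℝ => u j (z.2 + z.1 * w)) z

lemma KK_cont_s {m : ℕ} {a : ℕ → ℝ → ℂ} (ha : ∀ j, Sym m (a j)) {β : ℝ} (hβ0 : 0 ≤ β)
    (hβ : β + 1 < m) {M : ℝ} (hM : 0 ≤ M) {u : ℕ → ℝ → ℂ} (hu : UB m β M u) (x : ℝ) :
    Continuous (fun s => KK m a u s x) := by
  have h := KK_cont ha hβ0 hβ hM hu
  have h2 : Continuous fun s : ℝ => (s, x) := by fun_prop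
  have h3 := h.comp h2
  simpa only [Function.comp_def] using h3

lemma KK_cont_x {m : ℕ} {a : ℕ → ℝ → ℂ} (ha : ∀ j, Sym m (a j)) {β : ℝ} (hβ0 : 0 ≤ β)
    (hβ : β + 1 < m) {M : ℝ} (hM : 0 ≤ M) {u : ℕ → ℝ → ℂ} (hu : UB m β M u) (s : ℝ) :
    Continuous (KK m a u s) := by
  have h := KK_cont ha hβ0 hβ hM hu
  have h2 : Continuous fun x : ℝ => (s, x) := by fun_prop
  have h3 := h.comp h2
  simpa only [Function.comp_def] using h3

lemma KK_deriv {m : ℕ} {a : ℕ → ℝ → ℂ} (ha : ∀ j, Sym m (a j)) {β : ℝ} (hβ0 : 0 ≤ β)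
    (hβ : β + 1 < m) {M : ℝ} (hM : 0 ≤ M) {u v : ℕ → ℝ → ℂ} (hu : UB m β M u) (hv : UB m β M v)
    (huv : ∀ j ≤ m, ∀ y, HasDerivAt (u j) (v j y) y) (s x : ℝ) :
    HasDerivAt (KK m a u s) (KK m a v s x) x := by
  obtain ⟨b, hb, h⟩ := exists_bound ha hβ0 hβ hM (|x| + 1) |s|
  refine (hasDerivAt_integral_of_dominated_loc_of_deriv_le (s := Metric.ball x 1) (bound := b)
    (F := fun x w => KI m a u s x w) (F' := fun x w => KI m a v s x w)
    (Metric.ball_mem_nhds x one_pos) (Eventually.of_forall fun y =>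
      (KI_cont ha hu s y).aestronglyMeasurable) (KI_integrable ha hβ0 hβ hM hu s x)
    (KI_cont ha hv s x).aestronglyMeasurable (Eventually.of_forall fun w y hy => ?_) hb
    (Eventually.of_forall fun w y hy => ?_)).2
  · refine h v hv y s ?_ le_rfl w
    rw [Metric.mem_ball, Real.dist_eq] at hy
    have := abs_sub_abs_le_abs_sub y x
    linarith
  · unfold KI
    refine HasDerivAt.fun_sum fun j hj => ?_
    have hj := Finset.mem_range.1 hj
    refine ((HasDerivAt.comp_add_const (f := u j) y (s * w) (huv j (by omega) _)).const_mul _).const_mul _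


def hG (y : ℝ) : ℂ := Complex.exp (-(y : ℂ) ^ 2)

lemma norm_hG (y : ℝ) : ‖hG y‖ = Real.exp (-y ^ 2) := by
  unfold hG
  rw [Complex.norm_exp]
  congr 1
  simp [← Complex.ofReal_pow]

lemma hG_contDiff {n : WithTop ℕ∞} : ContDiff ℝ n hG := by
  unfold hG
  have : ContDiff ℝ n (fun y : ℝ => (y : ℂ)) := Complex.ofRealCLM.contDiff
  fun_prop

lemma hG_iter (i : ℕ) : ∃ P : Polynomial ℂ, ∀ y : ℝ, iteratedDeriv i hG y = P.eval (y : ℂ) * hG y := by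
  induction i with
  | zero => exact ⟨1, fun y => by simp⟩
  | succ i ih =>
    obtain ⟨P, hP⟩ := ih
    refine ⟨Polynomial.derivative P - 2 * Polynomial.X * P, fun y => ?_⟩
    rw [iteratedDeriv_succ, funext hP]
    have h1 : HasDerivAt (fun y : ℝ => P.eval (y : ℂ)) (P.derivative.eval (y : ℂ)) y :=
      (P.hasDerivAt (y : ℂ)).comp_ofReal
    have h2 : HasDerivAt hG (-2 * y * hG y) y := by
      have := ((hasDerivAt_ofReal y).pow 2).neg.cexp
      refine this.congr_deriv ?_
      unfold hG; simp; ring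
    refine (h1.mul h2).deriv.trans ?_
    simp
    ring

lemma poly_bd (P : Polynomial ℂ) : ∃ (C : ℝ) (d : ℕ), 0 ≤ C ∧
    ∀ y : ℝ, ‖P.eval (y : ℂ)‖ ≤ C * (1 + |y|) ^ d := by
  induction P using Polynomial.induction_on' with
  | add P Q h1 h2 =>
    obtain ⟨C, d, hC, h1⟩ := h1
    obtain ⟨D, e, hD, h2⟩ := h2
    refine ⟨C + D, d + e, by positivity, fun y => ?_⟩
    have hy : 1 ≤ 1 + |y| := by linarith [abs_nonneg y]
    rw [Polynomial.eval_add, add_mul]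
    refine (norm_add_le _ _).trans (add_le_add ((h1 y).trans ?_) ((h2 y).trans ?_))
    · gcongr
      omega
    · gcongr
      omega
  | monomial k c =>
    refine ⟨‖c‖, k, norm_nonneg _, fun y => ?_⟩
    simp only [Polynomial.eval_monomial, norm_mul, norm_pow, Complex.norm_real, Real.norm_eq_abs]
    gcongr
    linarith

lemma hG_decay (i N : ℕ) : ∃ C : ℝ, 0 ≤ C ∧ ∀ y, ‖iteratedDeriv i hG y‖ * (1 + |y|) ^ N ≤ C := by
  obtain ⟨P, hP⟩ := hG_iter i
  obtain ⟨C, d, hC, hb⟩ := poly_bd P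
  refine ⟨C * ((d + N).factorial * Real.exp (5 / 4)), by positivity, fun y => ?_⟩
  rw [hP, norm_mul, norm_hG]
  have h1 : (1 + |y|) ^ (d + N) ≤ (d + N).factorial * Real.exp (1 + |y|) := by
    have := Real.pow_div_factorial_le_exp (1 + |y|) (by positivity) (d + N)
    rw [div_le_iff₀ (by positivity)] at this
    linarith
  have h2 : Real.exp (1 + |y|) * Real.exp (-y ^ 2) ≤ Real.exp (5 / 4) := by
    rw [← Real.exp_add]
    apply Real.exp_le_exp.2
    nlinarith [sq_abs y, sq_nonneg (|y| - 1 / 2)]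
  calc _ ≤ (C * (1 + |y|) ^ d) * Real.exp (-y ^ 2) * (1 + |y|) ^ N := by gcongr; exact hb y
    _ = C * ((1 + |y|) ^ (d + N) * Real.exp (-y ^ 2)) := by rw [pow_add]; ring
    _ ≤ C * (((d + N).factorial * Real.exp (1 + |y|)) * Real.exp (-y ^ 2)) := by gcongr
    _ = C * ((d + N).factorial * (Real.exp (1 + |y|) * Real.exp (-y ^ 2))) := by ring
    _ ≤ _ := by gcongr

def gam (ε : ℝ) (y : ℝ) : ℂ := Complex.exp (-(ε : ℂ) * (y : ℂ) ^ 2)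

lemma gam_eq {ε : ℝ} (hε : 0 < ε) : gam ε = fun y => hG (√ε * y) := by
  ext y
  unfold gam hG
  congr 1
  have : ((√ε : ℝ) : ℂ) ^ 2 = ε := by exact_mod_cast Real.sq_sqrt hε.le
  rw [Complex.ofReal_mul, mul_pow, this]; ring

lemma gam_iter {ε : ℝ} (hε : 0 < ε) (i : ℕ) (y : ℝ) :
    iteratedDeriv i (gam ε) y = (√ε) ^ i • iteratedDeriv i hG (√ε * y) := by
  rw [gam_eq hε, iteratedDeriv_comp_const_smul hG_contDiff]

lemma gam_contDiff {n : WithTop ℕ∞} (ε : ℝ) : ContDiff ℝ n (gam ε) := by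
  unfold gam
  have : ContDiff ℝ n (fun y : ℝ => (y : ℂ)) := Complex.ofRealCLM.contDiff
  fun_prop

lemma gam_bd (i : ℕ) : ∃ B : ℝ, 0 ≤ B ∧ ∀ ε, 0 < ε → ∀ y,
    ‖iteratedDeriv i (gam ε) y‖ ≤ B * (√ε) ^ i := by
  obtain ⟨C, hC, h⟩ := hG_decay i 0
  refine ⟨C, hC, fun ε hε y => ?_⟩
  rw [gam_iter hε, norm_smul, norm_pow, Real.norm_eq_abs, abs_of_nonneg (Real.sqrt_nonneg _),
    mul_comm]
  have := h (√ε * y)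
  rw [pow_zero, mul_one] at this
  gcongr

lemma gam_decay {ε : ℝ} (hε : 0 < ε) (i N : ℕ) : ∃ C : ℝ, 0 ≤ C ∧ ∀ y,
    ‖iteratedDeriv i (gam ε) y‖ * (1 + |y|) ^ N ≤ C := by
  obtain ⟨C, hC, h⟩ := hG_decay i N
  have hs : 0 < √ε := Real.sqrt_pos.2 hε
  refine ⟨(√ε) ^ i * ((1 + 1 / √ε) ^ N * C), by positivity, fun y => ?_⟩
  rw [gam_iter hε, norm_smul, norm_pow, Real.norm_eq_abs, abs_of_nonneg hs.le, mul_assoc]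
  have h1 : 1 + |y| ≤ (1 + 1 / √ε) * (1 + |√ε * y|) := by
    rw [abs_mul, abs_of_pos hs]
    have : (1 + 1 / √ε) * (1 + √ε * |y|) = 1 + |y| + 1 / √ε + √ε * |y| := by
      field_simp; ring
    rw [this]
    have : 0 ≤ 1 / √ε + √ε * |y| := by positivity
    linarith
  refine mul_le_mul_of_nonneg_left ?_ (by positivity)
  calc _ ≤ ‖iteratedDeriv i hG (√ε * y)‖ * ((1 + 1 / √ε) * (1 + |√ε * y|)) ^ N := by gcongr
    _ = (1 + 1 / √ε) ^ N * (‖iteratedDeriv i hG (√ε * y)‖ * (1 + |√ε * y|) ^ N) := by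
      rw [mul_pow]; ring
    _ ≤ _ := by gcongr; exact h _

lemma gam_tendsto (i : ℕ) (y : ℝ) : Tendsto (fun ε => iteratedDeriv i (gam ε) y) (𝓝[>] 0)
    (𝓝 (if i = 0 then 1 else 0)) := by
  split_ifs with hi
  · subst hi
    simp only [iteratedDeriv_zero]
    have : Continuous (fun ε : ℝ => gam ε y) := by unfold gam; fun_prop
    have h := this.tendsto 0
    have h0 : gam 0 y = 1 := by simp [gam]
    rw [h0] at h
    exact h.mono_left nhdsWithin_le_nhds
  · obtain ⟨B, hB, h⟩ := gam_bd i
    have hc : Continuous (fun ε : ℝ => B * √ε ^ i) := by fun_prop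
    have := hc.tendsto 0
    simp only [Real.sqrt_zero, zero_pow hi, mul_zero] at this
    refine squeeze_zero_norm' ?_ (this.mono_left nhdsWithin_le_nhds)
    filter_upwards [self_mem_nhdsWithin] with ε hε using h ε hε y

def GG (F : ℝ → ℂ) (ε : ℝ) (y : ℝ) : ℂ := gam ε y * F y

lemma GG_contDiff {n : ℕ} {F : ℝ → ℂ} (hF : ContDiff ℝ n F) (ε : ℝ) : ContDiff ℝ n (GG F ε) := by
  unfold GG
  exact (gam_contDiff ε).mul hF

lemma GG_iter {n : ℕ} {F : ℝ → ℂ} (hF : ContDiff ℝ n F) (ε : ℝ) {k : ℕ} (hk : k ≤ n) (y : ℝ) :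
    iteratedDeriv k (GG F ε) y = ∑ i ∈ Finset.range (k + 1),
      (k.choose i : ℂ) * iteratedDeriv i (gam ε) y * iteratedDeriv (k - i) F y := by
  have : GG F ε = gam ε * F := rfl
  rw [this, iteratedDeriv_mul (gam_contDiff ε).contDiffAt
    (hF.of_le (by exact_mod_cast hk)).contDiffAt]

lemma GG_bd {n : ℕ} {β M : ℝ} {F : ℝ → ℂ} (hF : ContDiff ℝ n F) (hM : 0 ≤ M)
    (hb : ∀ k ≤ n, ∀ y : ℝ, ‖iteratedDeriv k F y‖ ≤ M * (1 + |y|) ^ β) :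
    ∃ M', M ≤ M' ∧ ∀ ε, 0 < ε → ε ≤ 1 → ∀ k ≤ n, ∀ y,
      ‖iteratedDeriv k (GG F ε) y‖ ≤ M' * (1 + |y|) ^ β := by
  choose B hB h using gam_bd
  have hS : ∀ k, 0 ≤ ∑ i ∈ Finset.range (k + 1), (k.choose i : ℝ) * B i * M := fun k =>
    Finset.sum_nonneg fun i _ => by have := hB i; positivity
  refine ⟨M + ∑ k ∈ Finset.range (n + 1), ∑ i ∈ Finset.range (k + 1), (k.choose i : ℝ) * B i * M,
    le_add_of_nonneg_right (Finset.sum_nonneg fun k _ => hS k), fun ε h0 h1 k hk y => ?_⟩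
  have hle := Finset.single_le_sum (f := fun k => ∑ i ∈ Finset.range (k + 1),
    (k.choose i : ℝ) * B i * M) (fun k _ => hS k) (Finset.mem_range.2 (by omega : k < n + 1))
  rw [GG_iter hF ε hk]
  calc _ ≤ ∑ i ∈ Finset.range (k + 1), (k.choose i : ℝ) * B i * M * (1 + |y|) ^ β := by
        refine (norm_sum_le _ _).trans (Finset.sum_le_sum fun i hi => ?_)
        rw [norm_mul, norm_mul, Complex.norm_natCast, mul_assoc _ M]
        have h2 := h i ε h0 y
        have h3 : B i * √ε ^ i ≤ B i := mul_le_of_le_one_right (hB i)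
          (pow_le_one₀ (Real.sqrt_nonneg _) (Real.sqrt_le_one.2 h1))
        have h4 := hb (k - i) (by omega) y
        have := hB i
        gcongr
        exact h2.trans h3
    _ = (∑ i ∈ Finset.range (k + 1), (k.choose i : ℝ) * B i * M) * (1 + |y|) ^ β := by
        rw [Finset.sum_mul]
    _ ≤ _ := by
        gcongr
        exact hle.trans (by linarith)

lemma GG_tendsto {n : ℕ} {F : ℝ → ℂ} (hF : ContDiff ℝ n F) {k : ℕ} (hk : k ≤ n) (y : ℝ) :
    Tendsto (fun ε => iteratedDeriv k (GG F ε) y) (𝓝[>] 0) (𝓝 (iteratedDeriv k F y)) := by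
  simp only [GG_iter hF _ hk]
  have h : Tendsto (fun ε => ∑ i ∈ Finset.range (k + 1),
      (k.choose i : ℂ) * iteratedDeriv i (gam ε) y * iteratedDeriv (k - i) F y) (𝓝[>] 0)
      (𝓝 (∑ i ∈ Finset.range (k + 1),
      (k.choose i : ℂ) * (if i = 0 then 1 else 0) * iteratedDeriv (k - i) F y)) :=
    tendsto_finsetSum _ fun i _ => ((gam_tendsto i y).const_mul _).mul_const _
  simpa using h

lemma GG_decay {n : ℕ} {β M : ℝ} {F : ℝ → ℂ} (hF : ContDiff ℝ n F) (hM : 0 ≤ M)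
    (hb : ∀ k ≤ n, ∀ y : ℝ, ‖iteratedDeriv k F y‖ ≤ M * (1 + |y|) ^ β) {ε : ℝ} (hε : 0 < ε)
    {k : ℕ} (hk : k ≤ n) :
    ∃ C, 0 ≤ C ∧ ∀ y, ‖iteratedDeriv k (GG F ε) y‖ * (1 + |y|) ^ 3 ≤ C := by
  obtain ⟨N, hN⟩ := exists_nat_ge β
  choose B hB h using fun i => gam_decay hε i (N + 3)
  refine ⟨∑ i ∈ Finset.range (k + 1), (k.choose i : ℝ) * B i * M,
    Finset.sum_nonneg fun i _ => by have := hB i; positivity, fun y => ?_⟩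
  rw [GG_iter hF ε hk, ]
  calc _ ≤ (∑ i ∈ Finset.range (k + 1), ‖(k.choose i : ℂ) * iteratedDeriv i (gam ε) y *
        iteratedDeriv (k - i) F y‖) * (1 + |y|) ^ 3 := by gcongr; exact norm_sum_le _ _
    _ ≤ _ := by
        rw [Finset.sum_mul]
        refine Finset.sum_le_sum fun i hi => ?_
        rw [norm_mul, norm_mul, Complex.norm_natCast]
        have h4 := hb (k - i) (by omega) y
        have h5 : (1 + |y|) ^ β ≤ (1 + |y|) ^ N := by
          rw [← Real.rpow_natCast]
          exact Real.rpow_le_rpow_of_exponent_le (by linarith [abs_nonneg y]) hN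
        calc _ ≤ (k.choose i : ℝ) * ‖iteratedDeriv i (gam ε) y‖ * (M * (1 + |y|) ^ N)
              * (1 + |y|) ^ 3 := by gcongr; exact h4.trans (by gcongr)
          _ = (k.choose i : ℝ) * (‖iteratedDeriv i (gam ε) y‖ * (1 + |y|) ^ (N + 3)) * M := by
              rw [pow_add]; ring
          _ ≤ _ := by gcongr; exact h i y


def U (F : ℝ → ℂ) (d : ℕ) : ℕ → ℝ → ℂ := fun j => iteratedDeriv (j + d) F

lemma U_UB {n m d : ℕ} {β M : ℝ} {F : ℝ → ℂ} (hF : ContDiff ℝ n F)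
    (hb : ∀ k ≤ n, ∀ y : ℝ, ‖iteratedDeriv k F y‖ ≤ M * (1 + |y|) ^ β) (hd : m + d ≤ n) :
    UB m β M (U F d) := fun j hj =>
  ⟨hF.continuous_iteratedDeriv (j + d) (by exact_mod_cast (by omega : j + d ≤ n)),
    hb _ (by omega)⟩

lemma contDiff_iter {n m d : ℕ} {F : ℝ → ℂ} (hF : ContDiff ℝ n F) (hd : m + d ≤ n) :
    ContDiff ℝ m (iteratedDeriv d F) := by
  rw [iteratedDeriv_eq_iterate]
  exact ContDiff.iterate_deriv' m d (hF.of_le (by exact_mod_cast hd))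

lemma iter_comp {n d j : ℕ} {F : ℝ → ℂ} (hF : ContDiff ℝ n F) (hd : j + d ≤ n) (s x : ℝ) (w : ℝ) :
    iteratedDeriv j (fun w => iteratedDeriv d F (x + s * w)) w =
      (s : ℂ) ^ j * iteratedDeriv (j + d) F (x + s * w) := by
  have h := contDiff_iter hF hd
  have h2 : ContDiff ℝ j (fun z => iteratedDeriv d F (x + z)) := by fun_prop
  rw [iteratedDeriv_comp_const_smul (f := fun z => iteratedDeriv d F (x + z)) h2,
    iteratedDeriv_comp_const_add]
  have : iteratedDeriv j (iteratedDeriv d F) = iteratedDeriv (j + d) F := by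
    simp only [iteratedDeriv_eq_iterate, Function.iterate_add_apply]
  rw [this]
  simp

lemma integrable_of_decay {g : ℝ → ℂ} (hg : Continuous g) {C : ℝ}
    (h : ∀ y, ‖g y‖ * (1 + |y|) ^ 2 ≤ C) : Integrable g := by
  have hi : Integrable (fun y : ℝ => C * (1 + ‖y‖) ^ (-(2 : ℝ))) :=
    (integrable_one_add_norm (by simp)).const_mul C
  refine hi.mono' hg.aestronglyMeasurable (Eventually.of_forall fun y => ?_)
  have hp : 0 < 1 + |y| := by positivity
  rw [Real.rpow_neg (by positivity), ← div_eq_mul_inv, Real.norm_eq_abs, Real.rpow_ofNat,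
    le_div_iff₀ (by positivity)]
  exact h y

lemma decay_weak {g : ℝ → ℂ} {C : ℝ}
    (h : ∀ y, ‖g y‖ * (1 + |y|) ^ 3 ≤ C) (y : ℝ) : ‖g y‖ * (1 + |y|) ^ 2 ≤ C := by
  refine le_trans ?_ (h y)
  gcongr
  · linarith [abs_nonneg y]
  · norm_num

lemma integrable_comp_aff {g : ℝ → ℂ} (hg : Integrable g) {s : ℝ} (hs : s ≠ 0) (x : ℝ) :
    Integrable (fun w => g (x + s * w)) :=
  (hg.comp_add_left x).comp_mul_left' hs

lemma rep {m : ℕ} {a : ℕ → ℝ → ℂ} (ha : Coeff m a) {n d : ℕ} {H : ℝ → ℂ} (hH : ContDiff ℝ n H)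
    (hd : m + d ≤ n) (hi : ∀ k ≤ n, Integrable (iteratedDeriv k H)) {s : ℝ} (hs : s ≠ 0) (x : ℝ) :
    ∫ w, E w * iteratedDeriv d H (x + s * w) = KK m a (U H d) s x := by
  have e : ∀ j ≤ m, iteratedDeriv j (fun w => iteratedDeriv d H (x + s * w)) =
      fun w => (s : ℂ) ^ j * iteratedDeriv (j + d) H (x + s * w) := fun j hj =>
    funext fun w => iter_comp hH (by omega) s x w
  have hI : ∀ j ≤ m, Integrable (iteratedDeriv j (fun w => iteratedDeriv d H (x + s * w))) := by
    intro j hj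
    rw [e j hj]
    exact (integrable_comp_aff (hi (j + d) (by omega)) hs x).const_mul _
  have h := contDiff_iter hH hd
  rw [ha.2 (fun w => iteratedDeriv d H (x + s * w)) (by fun_prop) hI, ← integral_finsetSum]
  · unfold KK KI
    congr 1
    ext w
    refine Finset.sum_congr rfl fun j hj => ?_
    have hj := Finset.mem_range.1 hj
    rw [e j (by omega)]
    rfl
  · intro j hj
    have hj := Finset.mem_range.1 hj
    exact (ha.1 j).integrable (hI j (by omega))

lemma norm_E_mul (w : ℝ) (z : ℂ) : ‖E w * z‖ = ‖z‖ := by rw [norm_mul, norm_E, one_mul]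

lemma integrable_E {g : ℝ → ℂ} (hg : Integrable g) : Integrable (fun w => E w * g w) :=
  hg.bdd_mul (c := 1) cont_E.aestronglyMeasurable (Eventually.of_forall fun w => (norm_E w).le)

lemma sder {H H' H'' : ℝ → ℂ} (h1 : ∀ y, HasDerivAt H (H' y) y) (h2 : ∀ y, HasDerivAt H' (H'' y) y)
    (hc : Continuous H'') {C : ℝ} (b0 : ∀ y, ‖H y‖ * (1 + |y|) ^ 3 ≤ C)
    (b1 : ∀ y, ‖H' y‖ * (1 + |y|) ^ 3 ≤ C) (b2 : ∀ y, ‖H'' y‖ * (1 + |y|) ^ 3 ≤ C)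
    {s0 : ℝ} (hs0 : 0 < s0) (x : ℝ) :
    HasDerivAt (fun s : ℝ => ∫ w, E w * H (x + s * w))
      (2 * Complex.I * s0 * ∫ w, E w * H'' (x + s0 * w)) s0 := by
  have c0 : Continuous H := continuous_iff_continuousAt.2 fun y => (h1 y).continuousAt
  have c1 : Continuous H' := continuous_iff_continuousAt.2 fun y => (h2 y).continuousAt
  have cE := cont_E
  have i0 := integrable_of_decay c0 (decay_weak b0)
  have i1 := integrable_of_decay c1 (decay_weak b1)
  have i2 := integrable_of_decay hc (decay_weak b2)
  set A : ℝ := 1 + (1 + |x|) / (s0 / 2) with hA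
  have hA0 : 0 < A := by positivity
  have hb : Integrable (fun w : ℝ => C * A ^ 3 * (1 + ‖w‖) ^ (-(2 : ℝ))) :=
    (integrable_one_add_norm (by simp)).const_mul _
  have key := hasDerivAt_integral_of_dominated_loc_of_deriv_le (s := Metric.ball s0 (s0 / 2))
    (μ := volume)
    (F := fun s w => E w * H (x + s * w)) (F' := fun s w => E w * (w * H' (x + s * w)))
    (Metric.ball_mem_nhds s0 (by positivity)) (Eventually.of_forall fun s =>
      (by fun_prop : Continuous fun w => E w * H (x + s * w)).aestronglyMeasurable)
    (integrable_E (integrable_comp_aff i0 hs0.ne' x))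
    (by fun_prop : Continuous fun w : ℝ => E w * (w * H' (x + s0 * w))).aestronglyMeasurable
    (Eventually.of_forall fun w s hs => ?_) hb
    (Eventually.of_forall fun w s hs => ?_)
  · refine key.2.congr_deriv ?_
    have I1 := key.1
    have I2 := integrable_E (integrable_comp_aff i2 hs0.ne' x)
    have z := integral_eq_zero_of_hasDerivAt_of_integrable
      (f := fun w => E w * H' (x + s0 * w))
      (f' := fun w => Complex.I / 2 * (E w * (w * H' (x + s0 * w)))
        + s0 * (E w * H'' (x + s0 * w))) (fun w => ?_)
      ((I1.const_mul _).add (I2.const_mul _)) (integrable_E (integrable_comp_aff i1 hs0.ne' x))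
    · rw [integral_add (I1.const_mul _) (I2.const_mul _), integral_const_mul,
        integral_const_mul] at z
      linear_combination (-2 * Complex.I) * z + (∫ w, E w * (w * H' (x + s0 * w))) * Complex.I_sq
    · have e1 : HasDerivAt (fun w : ℝ => x + s0 * w) s0 w := by
        simpa using ((hasDerivAt_id w).const_mul s0).const_add x
      have e2 := (h2 (x + s0 * w)).scomp w e1
      refine ((hasDerivAt_E w).mul e2).congr_deriv ?_
      simp
      ring
  · rw [Metric.mem_ball, Real.dist_eq] at hs
    have hs' : s0 / 2 ≤ s := by linarith [(abs_lt.1 hs).1]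
    have hsp : 0 < s := by linarith
    simp only [norm_mul, norm_E, one_mul, Complex.norm_real, Real.norm_eq_abs]
    have hw : 1 + |w| ≤ A * (1 + |x + s * w|) := by
      have e1 : |w| ≤ (|x + s * w| + |x|) / (s0 / 2) := by
        rw [le_div_iff₀ (by positivity)]
        calc |w| * (s0 / 2) ≤ |w| * s := by gcongr
          _ = |(x + s * w) - x| := by rw [add_sub_cancel_left, abs_mul, abs_of_pos hsp]; ring
          _ ≤ _ := abs_sub _ _
      have e2 : (|x + s * w| + |x|) / (s0 / 2) ≤ (1 + |x|) / (s0 / 2) * (1 + |x + s * w|) := by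
        rw [div_mul_eq_mul_div]
        gcongr
        nlinarith [abs_nonneg x, abs_nonneg (x + s * w), mul_nonneg (abs_nonneg x) (abs_nonneg (x + s * w))]
      have e3 := abs_nonneg (x + s * w)
      rw [hA, add_mul]
      linarith
    have hp : 0 < 1 + |w| := by positivity
    rw [Real.rpow_neg hp.le, ← div_eq_mul_inv, Real.rpow_ofNat, le_div_iff₀ (by positivity)]
    calc |w| * ‖H' (x + s * w)‖ * (1 + |w|) ^ 2 ≤ (1 + |w|) * ‖H' (x + s * w)‖ * (1 + |w|) ^ 2 := by
          gcongr; linarith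
      _ = ‖H' (x + s * w)‖ * (1 + |w|) ^ 3 := by ring
      _ ≤ ‖H' (x + s * w)‖ * (A * (1 + |x + s * w|)) ^ 3 := by gcongr
      _ = (‖H' (x + s * w)‖ * (1 + |x + s * w|) ^ 3) * A ^ 3 := by ring
      _ ≤ _ := by gcongr; exact b1 _
  · have e1 : HasDerivAt (fun s : ℝ => x + s * w) w s := by
      simpa using ((hasDerivAt_id s).mul_const w).const_add x
    have e2 := (h1 (x + s * w)).scomp s e1
    refine (e2.const_mul (E w)).congr_deriv ?_
    simp

section main
variable {m : ℕ} {a : ℕ → ℝ → ℂ} {β M : ℝ} {F : ℝ → ℂ}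

lemma GG_integrable (hF : ContDiff ℝ (m + 2 : ℕ) F) (hM : 0 ≤ M)
    (hb : ∀ k ≤ m + 2, ∀ y : ℝ, ‖iteratedDeriv k F y‖ ≤ M * (1 + |y|) ^ β) {ε : ℝ} (hε : 0 < ε) :
    ∀ k ≤ m + 2, Integrable (iteratedDeriv k (GG F ε)) := by
  intro k hk
  obtain ⟨C, hC, h⟩ := GG_decay hF hM hb hε hk
  exact integrable_of_decay ((GG_contDiff hF ε).continuous_iteratedDeriv k (by exact_mod_cast hk))
    (decay_weak h)

lemma KK_GG (ha : Coeff m a) (hβ0 : 0 ≤ β) (hβ : β + 1 < m) (hM : 0 ≤ M)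
    (hF : ContDiff ℝ (m + 2 : ℕ) F)
    (hb : ∀ k ≤ m + 2, ∀ y : ℝ, ‖iteratedDeriv k F y‖ ≤ M * (1 + |y|) ^ β) {d : ℕ} (hd : d ≤ 2)
    (s x : ℝ) :
    Tendsto (fun ε => KK m a (U (GG F ε) d) s x) (𝓝[>] 0) (𝓝 (KK m a (U F d) s x)) := by
  obtain ⟨M', hM', hb'⟩ := GG_bd hF hM hb
  refine KK_tendsto ha.1 hβ0 hβ (hM.trans hM') ?_ tendsto_const_nhds tendsto_const_nhds
    fun j hj w => GG_tendsto hF (by omega) _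
  filter_upwards [Ioc_mem_nhdsGT one_pos] with ε hε
  exact U_UB (GG_contDiff hF ε) (hb' ε hε.1 hε.2) (by omega)

lemma KK_ftc_eps (ha : Coeff m a) (hβ0 : 0 ≤ β) (hβ : β + 1 < m) (hM : 0 ≤ M)
    (hF : ContDiff ℝ (m + 2 : ℕ) F)
    (hb : ∀ k ≤ m + 2, ∀ y : ℝ, ‖iteratedDeriv k F y‖ ≤ M * (1 + |y|) ^ β) {ε : ℝ} (hε : 0 < ε)
    (hε1 : ε ≤ 1) (x : ℝ) {s₁ s₂ : ℝ} (hs₁ : 0 < s₁) (hs₂ : 0 < s₂) :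
    ∫ s in s₁..s₂, 2 * Complex.I * s * KK m a (U (GG F ε) 2) s x =
      KK m a (U (GG F ε) 0) s₂ x - KK m a (U (GG F ε) 0) s₁ x := by
  obtain ⟨M', hM', hb'⟩ := GG_bd hF hM hb
  have hG := GG_contDiff hF ε
  have hi := GG_integrable hF hM hb hε
  obtain ⟨C0, hC0, d0⟩ := GG_decay hF hM hb hε (by omega : 0 ≤ m + 2)
  obtain ⟨C1, hC1, d1⟩ := GG_decay hF hM hb hε (by omega : 1 ≤ m + 2)
  obtain ⟨C2, hC2, d2⟩ := GG_decay hF hM hb hε (by omega : 2 ≤ m + 2)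
  have hpos : ∀ s ∈ uIcc s₁ s₂, 0 < s := fun s hs => (lt_min hs₁ hs₂).trans_le hs.1
  have c2 := KK_cont_s ha.1 hβ0 hβ (hM.trans hM')
    (U_UB (d := 2) (m := m) hG (hb' ε hε hε1) (by omega)) x
  refine intervalIntegral.integral_eq_sub_of_hasDerivAt (f := fun s => KK m a (U (GG F ε) 0) s x)
    (fun s hs => ?_) ?_
  · have hs := hpos s hs
    have k := sder (H := iteratedDeriv 0 (GG F ε)) (H' := iteratedDeriv 1 (GG F ε))
      (H'' := iteratedDeriv 2 (GG F ε)) (C := C0 + C1 + C2)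
      (fun y => hasDerivAt_iteratedDeriv hG (by omega) y)
      (fun y => hasDerivAt_iteratedDeriv hG (by omega) y)
      (hG.continuous_iteratedDeriv 2 (by exact_mod_cast (by omega : 2 ≤ m + 2)))
      (fun y => (d0 y).trans (by linarith)) (fun y => (d1 y).trans (by linarith))
      (fun y => (d2 y).trans (by linarith)) hs x
    rw [rep ha hG (by omega) hi hs.ne'] at k
    refine k.congr_of_eventuallyEq ?_
    filter_upwards [lt_mem_nhds hs] with s' hs'
    exact (rep ha hG (by omega) hi hs'.ne' x).symm
  · apply Continuous.intervalIntegrable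
    exact (continuous_const.mul Complex.continuous_ofReal).mul c2

lemma KK_ftc (ha : Coeff m a) (hβ0 : 0 ≤ β) (hβ : β + 1 < m) (hM : 0 ≤ M)
    (hF : ContDiff ℝ (m + 2 : ℕ) F)
    (hb : ∀ k ≤ m + 2, ∀ y : ℝ, ‖iteratedDeriv k F y‖ ≤ M * (1 + |y|) ^ β)
    (x : ℝ) {s₁ s₂ : ℝ} (hs₁ : 0 < s₁) (hs₂ : 0 < s₂) :
    ∫ s in s₁..s₂, 2 * Complex.I * s * KK m a (U F 2) s x =
      KK m a (U F 0) s₂ x - KK m a (U F 0) s₁ x := by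
  obtain ⟨M', hM', hb'⟩ := GG_bd hF hM hb
  obtain ⟨b, hbi, hbb⟩ := exists_bound ha.1 hβ0 hβ (hM.trans hM') |x| (max s₁ s₂)
  have hev : Ioc (0 : ℝ) 1 ∈ 𝓝[>] (0 : ℝ) := Ioc_mem_nhdsGT one_pos
  have hUB : ∀ ε ∈ Ioc (0 : ℝ) 1, UB m β M' (U (GG F ε) 2) := fun ε hε =>
    U_UB (GG_contDiff hF ε) (hb' ε hε.1 hε.2) (by omega)
  have L1 : Tendsto (fun ε => ∫ s in s₁..s₂, 2 * Complex.I * s * KK m a (U (GG F ε) 2) s x)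
      (𝓝[>] 0) (𝓝 (∫ s in s₁..s₂, 2 * Complex.I * s * KK m a (U F 2) s x)) := by
    refine intervalIntegral.tendsto_integral_filter_of_dominated_convergence
      (fun _ => 2 * max s₁ s₂ * ∫ w, b w) ?_ ?_ (by simp) ?_
    · filter_upwards [hev] with ε hε
      apply Continuous.aestronglyMeasurable
      exact (continuous_const.mul Complex.continuous_ofReal).mul
        (KK_cont_s ha.1 hβ0 hβ (hM.trans hM') (hUB ε hε) x)
    · filter_upwards [hev] with ε hε
      refine Eventually.of_forall fun s hs => ?_
      have h1 : 0 < s := (lt_min hs₁ hs₂).trans hs.1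
      have h2 : |s| ≤ max s₁ s₂ := by rw [abs_of_pos h1]; exact hs.2
      have h3 : ‖KK m a (U (GG F ε) 2) s x‖ ≤ ∫ w, b w :=
        norm_integral_le_of_norm_le hbi
          (Eventually.of_forall (hbb _ (hUB ε hε) x s le_rfl h2))
      have h4 : ‖2 * Complex.I * (s : ℂ)‖ ≤ 2 * max s₁ s₂ := by
        simpa using h2
      rw [norm_mul]
      exact mul_le_mul h4 h3 (norm_nonneg _) ((norm_nonneg _).trans h4)
    · refine Eventually.of_forall fun s _ => ?_
      exact (KK_GG ha hβ0 hβ hM hF hb (by omega) s x).const_mul _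
  have L2 := (KK_GG ha hβ0 hβ hM hF hb (by omega : 0 ≤ 2) s₂ x).sub
    (KK_GG ha hβ0 hβ hM hF hb (by omega : 0 ≤ 2) s₁ x)
  refine tendsto_nhds_unique L1 (L2.congr' ?_)
  filter_upwards [hev] with ε hε
  exact (KK_ftc_eps ha hβ0 hβ hM hF hb hε.1 hε.2 x hs₁ hs₂).symm

end main


lemma cpow_scale {z : ℂ} (hz : z ≠ 0) {r : ℝ} (hr : 0 < r) :
    (z * r) ^ ((1 : ℂ) / 2) = z ^ ((1 : ℂ) / 2) * (√r : ℝ) := by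
  have hr' : (r : ℂ) ≠ 0 := by exact_mod_cast hr.ne'
  rw [Complex.cpow_def_of_ne_zero (mul_ne_zero hz hr'), Complex.cpow_def_of_ne_zero hz,
    Complex.log_mul_ofReal r hr z hz, add_mul, Complex.exp_add, mul_comm]
  congr 1
  have : √r = Real.exp (Real.log r * (1 / 2)) := by
    rw [Real.sqrt_eq_rpow, Real.rpow_def_of_pos hr]
  rw [this]
  push_cast
  rfl

lemma change_var (F : ℝ → ℂ) (ε : ℝ) {t : ℝ} (ht : 0 < t) (x : ℝ) :
    ∫ y : ℝ, Complex.exp (-(ε : ℂ) * y ^ 2) *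
      Complex.exp (Complex.I * ((y : ℂ) - x) ^ 2 / (4 * t)) * F y
    = (√t : ℝ) * ∫ w, E w * GG F ε (x + √t * w) := by
  have hs : 0 < √t := Real.sqrt_pos.2 ht
  set f : ℝ → ℂ := fun y => Complex.exp (-(ε : ℂ) * y ^ 2) *
      Complex.exp (Complex.I * ((y : ℂ) - x) ^ 2 / (4 * t)) * F y with hf
  have e1 : ∀ w, E w * GG F ε (x + √t * w) = f (x + √t * w) := by
    intro w
    have : Complex.exp (Complex.I * (((x + √t * w : ℝ) : ℂ) - x) ^ 2 / (4 * t)) = E w := by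
      unfold E
      congr 1
      have h2 : ((√t : ℝ) : ℂ) ^ 2 = t := by exact_mod_cast Real.sq_sqrt ht.le
      have h3 : (t : ℂ) ≠ 0 := by exact_mod_cast ht.ne'
      push_cast
      rw [add_sub_cancel_left, mul_pow, h2]
      field_simp
    rw [hf]
    simp only [this]
    unfold GG gam
    ring
  simp only [e1]
  rw [Measure.integral_comp_mul_left (fun z => f (x + z)) (√t),
    integral_add_left_eq_self f x, abs_of_pos (inv_pos.2 hs), Complex.real_smul, ← mul_assoc]
  have : ((√t : ℝ) : ℂ) * ((√t)⁻¹ : ℝ) = 1 := by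
    rw [← Complex.ofReal_mul, mul_inv_cancel₀ hs.ne', Complex.ofReal_one]
  rw [this, one_mul]

section main2
variable {m : ℕ} {a : ℕ → ℝ → ℂ} {β M : ℝ} {F : ℝ → ℂ}

lemma rep0 (ha : Coeff m a) (hM : 0 ≤ M)
    (hF : ContDiff ℝ (m + 2 : ℕ) F)
    (hb : ∀ k ≤ m + 2, ∀ y : ℝ, ‖iteratedDeriv k F y‖ ≤ M * (1 + |y|) ^ β) {ε : ℝ} (hε : 0 < ε)
    {s : ℝ} (hs : 0 < s) (x : ℝ) :
    ∫ w, E w * GG F ε (x + s * w) = KK m a (U (GG F ε) 0) s x := by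
  have := rep ha (d := 0) (GG_contDiff hF ε) (by omega) (GG_integrable hF hM hb hε) hs.ne' x
  simpa only [iteratedDeriv_zero] using this

lemma lim_exists (ha : Coeff m a) (hβ0 : 0 ≤ β) (hβ : β + 1 < m) (hM : 0 ≤ M)
    (hF : ContDiff ℝ (m + 2 : ℕ) F)
    (hb : ∀ k ≤ m + 2, ∀ y : ℝ, ‖iteratedDeriv k F y‖ ≤ M * (1 + |y|) ^ β) {t : ℝ} (ht : 0 < t)
    (x : ℝ) :
    Tendsto (fun ε : ℝ => ∫ y : ℝ, Complex.exp (-(ε : ℂ) * y ^ 2) *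
      Complex.exp (Complex.I * ((y : ℂ) - x) ^ 2 / (4 * t)) * F y) (𝓝[>] 0)
      (𝓝 ((√t : ℝ) * KK m a (U F 0) (√t) x)) := by
  have h := (KK_GG ha hβ0 hβ hM hF hb (by omega : 0 ≤ 2) (√t) x).const_mul ((√t : ℝ) : ℂ)
  refine h.congr' ?_
  filter_upwards [self_mem_nhdsWithin] with ε hε
  rw [change_var F ε ht x, rep0 ha hM hF hb hε (Real.sqrt_pos.2 ht)]

lemma KK_one (ha : Coeff m a) (hβ0 : 0 ≤ β) (hβ : β + 1 < m) :
    KK m a (U (fun _ => 1) 0) 1 0 = 2 * (Complex.I * Real.pi) ^ ((1 : ℂ) / 2) := by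
  have hF : ContDiff ℝ (m + 2 : ℕ) (fun _ : ℝ => (1 : ℂ)) := contDiff_const
  have hb : ∀ k ≤ m + 2, ∀ y : ℝ, ‖iteratedDeriv k (fun _ : ℝ => (1 : ℂ)) y‖
      ≤ 1 * (1 + |y|) ^ β := by
    intro k _ y
    have : (1 : ℝ) ≤ (1 + |y|) ^ β := Real.one_le_rpow (by linarith [abs_nonneg y]) hβ0
    rw [iteratedDeriv_const]
    split_ifs
    · simpa using this
    · simp; positivity
  have h := KK_GG ha hβ0 hβ zero_le_one hF hb (by omega : 0 ≤ 2) 1 0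
  have hpi : (Real.pi : ℂ) ≠ 0 := by exact_mod_cast Real.pi_ne_zero
  have e4 : (Real.pi : ℂ) / (((0 : ℝ) : ℂ) - Complex.I / 4) = Complex.I * Real.pi * (4 : ℝ) := by
    have hI := Complex.I_ne_zero
    rw [div_eq_iff (by simp)]
    push_cast
    linear_combination (Real.pi : ℂ) * Complex.I_sq
  have hs : (Real.pi : ℂ) / (((0 : ℝ) : ℂ) - Complex.I / 4) ∈ Complex.slitPlane := by
    rw [e4]
    right
    simp [Real.pi_ne_zero]
  have hc : ContinuousAt (fun ε : ℝ => ((Real.pi : ℂ) / ((ε : ℂ) - Complex.I / 4)) ^ ((1 : ℂ) / 2))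
      0 := by
    refine ContinuousAt.cpow ?_ continuousAt_const hs
    refine continuousAt_const.div (by fun_prop) (by simp)
  have h2 := hc.tendsto.mono_left (nhdsWithin_le_nhds (s := Ioi (0 : ℝ)))
  have hlim : ((Real.pi : ℂ) / (((0 : ℝ) : ℂ) - Complex.I / 4)) ^ ((1 : ℂ) / 2)
      = 2 * (Complex.I * Real.pi) ^ ((1 : ℂ) / 2) := by
    rw [e4, cpow_scale (mul_ne_zero Complex.I_ne_zero hpi) (by norm_num)]
    have : √(4 : ℝ) = 2 := by
      rw [show (4 : ℝ) = 2 ^ 2 by norm_num]; exact Real.sqrt_sq (by norm_num)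
    rw [this]; push_cast; ring
  rw [hlim] at h2
  refine tendsto_nhds_unique h (h2.congr' ?_)
  filter_upwards [self_mem_nhdsWithin] with ε hε
  rw [← rep0 ha zero_le_one hF hb hε one_pos, ← integral_gaussian_complex (by simpa using hε)]
  congr 1
  ext w
  unfold E GG gam
  rw [mul_one, ← Complex.exp_add]
  congr 1
  push_cast
  ring

lemma KK_zero (x : ℝ) :
    KK m a (U F 0) 0 x = F x * KK m a (U (fun _ => 1) 0) 1 0 := by
  unfold KK
  rw [← integral_const_mul]
  congr 1
  ext w
  unfold KI U
  rw [Finset.sum_range_succ', Finset.sum_range_succ']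
  simp [iteratedDeriv_const]
  ring

lemma KK_sder (ha : Coeff m a) (hβ0 : 0 ≤ β) (hβ : β + 1 < m) (hM : 0 ≤ M)
    (hF : ContDiff ℝ (m + 2 : ℕ) F)
    (hb : ∀ k ≤ m + 2, ∀ y : ℝ, ‖iteratedDeriv k F y‖ ≤ M * (1 + |y|) ^ β)
    (x : ℝ) {s : ℝ} (hs : 0 < s) :
    HasDerivAt (fun s => KK m a (U F 0) s x) (2 * Complex.I * s * KK m a (U F 2) s x) s := by
  have c2 := KK_cont_s ha.1 hβ0 hβ hM (U_UB (d := 2) (m := m) hF hb (by omega)) x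
  have c3 : Continuous fun s : ℝ => 2 * Complex.I * s * KK m a (U F 2) s x :=
    (continuous_const.mul Complex.continuous_ofReal).mul c2
  have h := (c3.integral_hasStrictDerivAt s s).hasDerivAt.const_add (KK m a (U F 0) s x)
  refine h.congr_of_eventuallyEq ?_
  filter_upwards [lt_mem_nhds hs] with s' hs'
  rw [KK_ftc ha hβ0 hβ hM hF hb x hs hs']
  ring

lemma KK_tder (ha : Coeff m a) (hβ0 : 0 ≤ β) (hβ : β + 1 < m) (hM : 0 ≤ M)
    (hF : ContDiff ℝ (m + 2 : ℕ) F)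
    (hb : ∀ k ≤ m + 2, ∀ y : ℝ, ‖iteratedDeriv k F y‖ ≤ M * (1 + |y|) ^ β)
    (x : ℝ) {t : ℝ} (ht : 0 < t) :
    HasDerivAt (fun t => KK m a (U F 0) (√t) x) (Complex.I * KK m a (U F 2) (√t) x) t := by
  have hs : 0 < √t := Real.sqrt_pos.2 ht
  have h := (KK_sder ha hβ0 hβ hM hF hb x hs).scomp t (Real.hasDerivAt_sqrt ht.ne')
  refine h.congr_deriv ?_
  have : ((√t : ℝ) : ℂ) ≠ 0 := by exact_mod_cast hs.ne'
  rw [Complex.real_smul]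
  push_cast
  field_simp

end main2

lemma isACOn_of_cont {I : Set ℝ} (hI : I.OrdConnected) {g h : ℝ → ℂ} (hc : Continuous h)
    (hd : ∀ t ∈ I, HasDerivAt g (h t) t) : IsACOn I g := by
  refine ⟨h, hc.locallyIntegrable.locallyIntegrableOn I, fun s₁ h₁ s₂ h₂ _ => ?_⟩
  rw [intervalIntegral.integral_eq_sub_of_hasDerivAt
    (fun t ht => hd t (hI.uIcc_subset h₁ h₂ ht)) (hc.intervalIntegrable _ _)]

end FreeP


/-- the free particle.  For `F ∈ C^n(ℝ,r^β)` with `n ≥ 4` and `0 ≤ β < n-3`,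
the function `Ψ(t,x) = (1/(2√(iπt))) · lim_{ε→0⁺} ∫_ℝ e^{-εy²} e^{i(y-x)²/(4t)} F(y) dy`
(principal complex square root) is a solution of the free Schrödinger equation in
`AC_{1,2}((0,∞)×ℝ)` attaining the initial condition `F`. -/
theorem stmt19 (n : ℕ) (hn : 4 ≤ n) (β : ℝ) (hβ0 : 0 ≤ β) (hβ : β < (n : ℝ) - 3)
    (F : ℝ → ℂ) (hF : MemCnR n β F) :
    ∃ (Ψ : ℝ → ℝ → ℂ) (L : ℝ → ℝ → ℂ),
      (∀ t : ℝ, 0 < t → ∀ x : ℝ,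
        Tendsto (fun ε : ℝ => ∫ y : ℝ,
            Complex.exp (-(ε : ℂ) * y ^ 2) *
              Complex.exp (Complex.I * ((y : ℂ) - x) ^ 2 / (4 * t)) * F y)
          (𝓝[>] 0) (𝓝 (L t x)) ∧
        Ψ t x = 1 / (2 * (Complex.I * Real.pi * t) ^ ((1 : ℂ) / 2)) * L t x) ∧
      MemAC12 (Set.Ioi 0) Ψ ∧
      (∀ᵐ t ∂(volume : Measure ℝ), 0 < t → ∀ x : ℝ,
        Complex.I * deriv (fun τ => Ψ τ x) t = -(deriv (deriv (Ψ t)) x)) ∧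
      ∀ x : ℝ, Tendsto (fun t => Ψ t x) (𝓝[>] 0) (𝓝 (F x)) := by
  obtain ⟨hFc, M, hM, hb⟩ := hF
  obtain ⟨m, rfl⟩ : ∃ m, n = m + 2 := ⟨n - 2, by omega⟩
  have hβ1 : β + 1 < m := by push_cast at hβ; linarith
  obtain ⟨a, ha⟩ := FreeP.exists_coeff m
  have hpi : (Real.pi : ℂ) ≠ 0 := by exact_mod_cast Real.pi_ne_zero
  have hIpi : Complex.I * (Real.pi : ℂ) ≠ 0 := mul_ne_zero Complex.I_ne_zero hpi
  have hroot : (Complex.I * (Real.pi : ℂ)) ^ ((1 : ℂ) / 2) ≠ 0 := by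
    rw [Complex.cpow_def_of_ne_zero hIpi]; exact Complex.exp_ne_zero _
  have ub0 := FreeP.U_UB (d := 0) (m := m) hFc hb (by omega)
  have ub1 := FreeP.U_UB (d := 1) (m := m) hFc hb (by omega)
  have ub2 := FreeP.U_UB (d := 2) (m := m) hFc hb (by omega)
  have dx1 : ∀ s x, HasDerivAt (FreeP.KK m a (FreeP.U F 0) s)
      (FreeP.KK m a (FreeP.U F 1) s x) x := fun s x =>
    FreeP.KK_deriv ha.1 hβ0 hβ1 hM ub0 ub1
      (fun j hj y => FreeP.hasDerivAt_iteratedDeriv hFc (j := j) (by omega) y) s x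
  have dx2 : ∀ s x, HasDerivAt (FreeP.KK m a (FreeP.U F 1) s)
      (FreeP.KK m a (FreeP.U F 2) s x) x := fun s x =>
    FreeP.KK_deriv ha.1 hβ0 hβ1 hM ub1 ub2
      (fun j hj y => FreeP.hasDerivAt_iteratedDeriv hFc (j := j + 1) (by omega) y) s x
  have dt : ∀ x t, 0 < t → HasDerivAt (fun t => FreeP.KK m a (FreeP.U F 0) (√t) x)
      (Complex.I * FreeP.KK m a (FreeP.U F 2) (√t) x) t := fun x t ht =>
    FreeP.KK_tder ha hβ0 hβ1 hM hFc hb x ht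
  set c : ℂ := 1 / (2 * (Complex.I * Real.pi) ^ ((1 : ℂ) / 2)) with hc
  have derx : ∀ t : ℝ, deriv (fun x => c * FreeP.KK m a (FreeP.U F 0) (√t) x)
      = fun x => c * FreeP.KK m a (FreeP.U F 1) (√t) x := fun t =>
    funext fun x => ((dx1 (√t) x).const_mul c).deriv
  refine ⟨fun t x => c * FreeP.KK m a (FreeP.U F 0) (√t) x,
    fun t x => (√t : ℝ) * FreeP.KK m a (FreeP.U F 0) (√t) x, ?_, ⟨?_, ?_⟩, ?_, ?_⟩
  · intro t ht x
    refine ⟨FreeP.lim_exists ha hβ0 hβ1 hM hFc hb ht x, ?_⟩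
    have hs : ((√t : ℝ) : ℂ) ≠ 0 := by exact_mod_cast (Real.sqrt_pos.2 ht).ne'
    rw [FreeP.cpow_scale hIpi ht, hc]
    field_simp
  · intro x
    refine FreeP.isACOn_of_cont ordConnected_Ioi
      (h := fun t => c * (Complex.I * FreeP.KK m a (FreeP.U F 2) (√t) x)) ?_
      (fun t ht => (dt x t ht).const_mul c)
    have h1 := FreeP.KK_cont_s ha.1 hβ0 hβ1 hM ub2 x
    have h2 := h1.comp Real.continuous_sqrt
    exact continuous_const.mul (continuous_const.mul h2)
  · intro t ht
    constructor
    · exact FreeP.isACOn_of_cont ordConnected_univ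
        (continuous_const.mul (FreeP.KK_cont_x ha.1 hβ0 hβ1 hM ub1 (√t)))
        (fun x _ => (dx1 (√t) x).const_mul c)
    · rw [derx t]
      exact FreeP.isACOn_of_cont ordConnected_univ
        (continuous_const.mul (FreeP.KK_cont_x ha.1 hβ0 hβ1 hM ub2 (√t)))
        (fun x _ => (dx2 (√t) x).const_mul c)
  · refine Eventually.of_forall fun t ht x => ?_
    rw [derx t, ((dx2 (√t) x).const_mul c).deriv, ((dt x t ht).const_mul c).deriv]
    linear_combination (c * FreeP.KK m a (FreeP.U F 2) (√t) x) * Complex.I_sq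
  · intro x
    have h1 := FreeP.KK_cont_s ha.1 hβ0 hβ1 hM ub0 x
    have h2 := h1.comp Real.continuous_sqrt
    have h3 := (h2.tendsto 0).const_mul c
    have h4 : c * ((fun s => FreeP.KK m a (FreeP.U F 0) s x) ∘ Real.sqrt) 0 = F x := by
      simp only [Function.comp_apply, Real.sqrt_zero]
      rw [FreeP.KK_zero, FreeP.KK_one ha hβ0 hβ1, hc]
      field_simp
    rw [h4] at h3
    exact h3.mono_left nhdsWithin_le_nhds
end
end
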